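/- arXiv:2511.08879 — 3 statements merged into one kernel-verified Lean document; each statement's English description precedes it below -/
import Mathlib

section
/- Let n ≥ 2 and let μ = (μ₁,…,μₙ) ∈ ℤⁿ be weakly decreasing. Then 1 < depth(μ) < 2 holds if and only if there exists an integer k such that either μ − k·(1,…,1) or μ* − k·(1,…,1) equals one of the following vectors in ℤⁿ: (2,0,…,0,−1) (allowed for every n ≥ 2); (2,0,…,0) (only for n ≥ 3); (1,1,0,…,0,−1) (only for n ≥ 3); (1,1,0,…,0) (only for n ≥ 5); (2,1,0,0,0) (only for n = 5); (1,1,1,0,…,0) (only for n ∈ {6,7,8}). Here μ* := (−μₙ, −μₙ₋₁, …, −μ₁) denotes the weakly decreasing rearrangement of (−μ₁,…,−μₙ). -/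
/-- Sum of the first `j` entries of a vector indexed by `Fin n`. -/
def psum {n : ℕ} (μ : Fin n → ℤ) (j : ℕ) : ℤ :=
  ∑ i ∈ Finset.univ.filter (fun i : Fin n => (i : ℕ) < j), μ i

/-- The depth of a weakly decreasing vector `μ ∈ ℤⁿ`, viewed as a dominant
cocharacter of `GL_n`:  `max_{1 ≤ j ≤ n-1} (μ₁+⋯+μⱼ) − (j/n)(μ₁+⋯+μₙ)`. -/
def depth {n : ℕ} (μ : Fin n → ℤ) : ℚ :=
  if h : (Finset.Icc 1 (n - 1)).Nonempty then
    (Finset.Icc 1 (n - 1)).sup' h fun j : ℕ =>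
      (psum μ j : ℚ) - (j : ℚ) / (n : ℚ) * (psum μ n : ℚ)
  else 0

/-- `μ* := (−μₙ, −μₙ₋₁, …, −μ₁)`, the weakly decreasing rearrangement of `−μ`. -/
def dualVec {n : ℕ} (μ : Fin n → ℤ) : Fin n → ℤ := fun i => - μ i.rev

/-!
For antitone `μ` the partial sums of `μ - mean μ` increase as long as `μ i > mean μ`, so
`depth μ = ∑ i, (μ i - mean μ)⁺`; this is invariant under translation and duality. If
`0 < depth μ < 2`, summing over initial and final segments forces every entry into
`{⌊mean μ⌋, ⌊mean μ⌋ + 1}`, except that the first may be larger by one and the last smaller by one.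
Hence, up to translation, `μ = (1^p, 0^q) + ε e₁ - η eₙ` with `p, q ≥ 1` and `ε, η ∈ {0, 1}`, and
then `n * depth μ = p q + q ε + p η`. Since `p q ≥ 2 (p + q)` for `p, q ≥ 4`, requiring this to lie
strictly between `n` and `2 n` leaves only the listed cases, up to exchanging `(p, ε)` and `(q, η)`,
which is duality.
-/

open Finset
open scoped BigOperators

section Depth

variable {n : ℕ} {μ : Fin n → ℤ}

lemma sum_ite_val_lt {R : Type*} [NonAssocSemiring R] {j : ℕ} (hj : j ≤ n) (c : R) :
    ∑ i : Fin n, (if (i : ℕ) < j then c else 0) = j * c := by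
  rw [← sum_filter, sum_const, Fin.card_filter_val_lt, min_eq_right hj, nsmul_eq_mul]

lemma sum_ite_val_eq {M : Type*} [AddCommMonoid M] {j : ℕ} (hj : j < n) (c : M) :
    ∑ i : Fin n, (if (i : ℕ) = j then c else 0) = c := by
  simpa only [Fin.ext_iff, mem_univ, if_true] using sum_ite_eq' univ (⟨j, hj⟩ : Fin n) fun _ => c

/-- The average of the entries of `μ`; for `n = 0` it is `0`. -/
def mean (μ : Fin n → ℤ) : ℚ := 𝔼 i, (μ i : ℚ)

lemma natCast_mul_mean (μ : Fin n → ℤ) : n * mean μ = ∑ i, (μ i : ℚ) := by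
  simpa only [mean, Fintype.card_fin] using Fintype.card_mul_expect fun i => (μ i : ℚ)

lemma sum_sub_mean (μ : Fin n → ℤ) : ∑ i, ((μ i : ℚ) - mean μ) = 0 :=
  Fintype.sum_balance fun i => (μ i : ℚ)

lemma sub_mean_sub_const (μ : Fin n → ℤ) (k : ℤ) (i : Fin n) :
    ((μ i - k : ℤ) : ℚ) - mean (fun j => μ j - k) = μ i - mean μ := by
  have : Nonempty (Fin n) := ⟨i⟩
  simp only [mean, Int.cast_sub, expect_sub_distrib, Fintype.expect_const]
  ring

lemma mean_dualVec (μ : Fin n → ℤ) : mean (dualVec μ) = -mean μ := by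
  simp only [mean, dualVec, Int.cast_neg, expect_neg_distrib]
  exact congrArg Neg.neg (Fintype.expect_equiv Fin.revPerm _ _ fun _ => rfl)

lemma mean_le_apply_zero (hμ : Antitone μ) (hn : 0 < n) : mean μ ≤ μ ⟨0, hn⟩ :=
  expect_le ⟨⟨0, hn⟩, mem_univ _⟩ fun i _ => Int.cast_le.2 <| hμ <| Nat.zero_le i

lemma apply_last_le_mean (hμ : Antitone μ) (hn : 0 < n) : μ ⟨n - 1, by lia⟩ ≤ mean μ :=
  le_expect ⟨⟨0, hn⟩, mem_univ _⟩ fun i _ => Int.cast_le.2 <| hμ <| Nat.le_sub_one_of_lt i.isLt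

lemma psum_sub_div_mul_psum (μ : Fin n → ℤ) {j : ℕ} (hj : j ≤ n) :
    (psum μ j : ℚ) - (j : ℚ) / n * psum μ n = ∑ i : Fin n with i.val < j, ((μ i : ℚ) - mean μ) := by
  have hmean : (psum μ n : ℚ) / n = mean μ := by
    simp [psum, mean, Fintype.expect_eq_sum_div_card]
  simp only [sum_sub_distrib, sum_const, Fin.card_filter_val_lt, min_eq_right hj, nsmul_eq_mul,
    ← hmean, psum, Int.cast_sum]
  ring

lemma sum_le_sum_posPart {ι G : Type*} [Fintype ι] [AddCommGroup G] [Lattice G]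
    [IsOrderedAddMonoid G] (s : Finset ι) (f : ι → G) :
    ∑ i ∈ s, f i ≤ ∑ i, (f i)⁺ :=
  (sum_le_sum fun i _ => le_posPart (f i)).trans <|
    sum_le_univ_sum_of_nonneg fun i => posPart_nonneg (f i)

lemma exists_sum_filter_lt_eq_sum_posPart (hμ : Antitone μ) (hn : 2 ≤ n) :
    ∃ j ∈ Icc 1 (n - 1), ∑ i : Fin n with i.val < j, ((μ i : ℚ) - mean μ) =
      ∑ i, ((μ i : ℚ) - mean μ)⁺ := by
  set p := #{i | mean μ < μ i}
  have lt_p_iff (i : Fin n) : i.val < p ↔ mean μ < μ i :=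
    Tuple.lt_card_gt_iff_apply_gt_of_antitone (Int.cast_mono.comp_antitone hμ)
  have hpn : p ≤ n - 1 :=
    not_lt.1 <| (lt_p_iff ⟨n - 1, by lia⟩).not.2 (apply_last_le_mean hμ (by lia)).not_gt
  -- The maximum with `1` matters only for constant `μ`, where `p = 0`.
  refine ⟨max 1 p, by grind, ?_⟩
  rw [sum_filter]
  refine sum_congr rfl fun i _ => ?_
  split_ifs with hi
  · refine (posPart_of_nonneg (sub_nonneg.2 ?_)).symm
    rcases lt_max_iff.1 hi with hi | hi
    · obtain rfl : i = ⟨0, by lia⟩ := Fin.ext (by lia)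
      exact mean_le_apply_zero hμ (by lia)
    · exact ((lt_p_iff i).1 hi).le
  · refine (posPart_of_nonpos (sub_nonpos.2 (not_lt.1 fun h => hi ?_))).symm
    exact lt_max_of_lt_right ((lt_p_iff i).2 h)

lemma depth_eq_sum_posPart (hμ : Antitone μ) : depth μ = ∑ i, ((μ i : ℚ) - mean μ)⁺ := by
  rcases lt_or_ge n 2 with hn | hn
  · interval_cases n <;> simp [depth, mean]
  have hne : (Icc 1 (n - 1)).Nonempty := ⟨1, mem_Icc.2 (by lia)⟩
  rw [depth, dif_pos hne]
  refine le_antisymm (sup'_le _ _ fun j hj => ?_) ?_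
  · rw [psum_sub_div_mul_psum μ (by grind)]
    exact sum_le_sum_posPart _ _
  · obtain ⟨j, hj, hsum⟩ := exists_sum_filter_lt_eq_sum_posPart hμ hn
    rw [← hsum, ← psum_sub_div_mul_psum μ (by grind)]
    exact le_sup' (fun j : ℕ => (psum μ j : ℚ) - (j : ℚ) / n * psum μ n) hj

lemma depth_sub_const (hμ : Antitone μ) (k : ℤ) : depth (fun i => μ i - k) = depth μ := by
  have hμk : Antitone fun i => μ i - k := fun _ _ hij => sub_le_sub_right (hμ hij) k
  simp only [depth_eq_sum_posPart hμk, depth_eq_sum_posPart hμ, sub_mean_sub_const]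

lemma sum_negPart_sub_mean (μ : Fin n → ℤ) :
    ∑ i, ((μ i : ℚ) - mean μ)⁻ = ∑ i, ((μ i : ℚ) - mean μ)⁺ := by
  refine (sub_eq_zero.1 ?_).symm
  simpa only [← sum_sub_distrib, posPart_sub_negPart] using sum_sub_mean μ

lemma antitone_dualVec (hμ : Antitone μ) : Antitone (dualVec μ) := fun _ _ hij =>
  neg_le_neg (hμ (Fin.rev_le_rev.2 hij))

lemma depth_dualVec (hμ : Antitone μ) : depth (dualVec μ) = depth μ := by
  rw [depth_eq_sum_posPart (antitone_dualVec hμ), depth_eq_sum_posPart hμ,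
    ← sum_negPart_sub_mean μ, mean_dualVec]
  refine Fintype.sum_equiv Fin.revPerm _ _ fun i => ?_
  rw [← posPart_neg, neg_sub', Fin.revPerm_apply, dualVec, Int.cast_neg]

lemma sum_sub_mean_le_depth (hμ : Antitone μ) (s : Finset (Fin n)) :
    ∑ i ∈ s, ((μ i : ℚ) - mean μ) ≤ depth μ :=
  (sum_le_sum_posPart s _).trans_eq (depth_eq_sum_posPart hμ).symm

lemma sum_mean_sub_le_depth (hμ : Antitone μ) (s : Finset (Fin n)) :
    ∑ i ∈ s, (mean μ - μ i) ≤ depth μ := by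
  have hcompl : ∑ i ∈ s, ((μ i : ℚ) - mean μ) + ∑ i ∈ sᶜ, ((μ i : ℚ) - mean μ) = 0 :=
    (sum_add_sum_compl s _).trans (sum_sub_mean μ)
  have hneg : ∑ i ∈ s, (mean μ - μ i) = -∑ i ∈ s, ((μ i : ℚ) - mean μ) := by
    simp only [← sum_neg_distrib, neg_sub]
  linarith [sum_sub_mean_le_depth hμ sᶜ]

lemma succ_mul_sub_mean_le_depth (hμ : Antitone μ) (i : Fin n) :
    (i.val + 1) * ((μ i : ℚ) - mean μ) ≤ depth μ :=
  calc (i.val + 1) * ((μ i : ℚ) - mean μ)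
      = ∑ _j ∈ Iic i, ((μ i : ℚ) - mean μ) := by
        rw [sum_const, Fin.card_Iic, nsmul_eq_mul, Nat.cast_succ]
    _ ≤ ∑ j ∈ Iic i, ((μ j : ℚ) - mean μ) := by
        gcongr with j hj
        exact hμ (mem_Iic.1 hj)
    _ ≤ depth μ := sum_sub_mean_le_depth hμ _

lemma sub_mul_mean_sub_le_depth (hμ : Antitone μ) (i : Fin n) :
    (n - i.val) * (mean μ - (μ i : ℚ)) ≤ depth μ :=
  calc (n - i.val) * (mean μ - (μ i : ℚ))
      = ∑ _j ∈ Ici i, (mean μ - (μ i : ℚ)) := by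
        rw [sum_const, Fin.card_Ici, nsmul_eq_mul, Nat.cast_sub i.isLt.le]
    _ ≤ ∑ j ∈ Ici i, (mean μ - (μ j : ℚ)) := by
        gcongr with j hj
        exact hμ (mem_Ici.1 hj)
    _ ≤ depth μ := sum_mean_sub_le_depth hμ _

lemma mean_lt_apply_zero (hμ : Antitone μ) (hn : 0 < n) (h : 0 < depth μ) :
    mean μ < μ ⟨0, hn⟩ := by
  rw [depth_eq_sum_posPart hμ] at h
  obtain ⟨i, -, hi⟩ := exists_lt_of_sum_lt (by simpa using h : ∑ _i : Fin n, (0 : ℚ) < _)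
  exact (sub_pos.1 (posPart_pos_iff.1 hi)).trans_le <| Int.cast_le.2 <| hμ <| Nat.zero_le i

lemma apply_le_floor_mean_add_two (hμ : Antitone μ) (hlt : depth μ < 2) (i : Fin n) :
    μ i ≤ ⌊mean μ⌋ + 2 := by
  by_contra! h
  have hmean := Int.lt_floor_add_one (mean μ)
  have hμi : (⌊mean μ⌋ : ℚ) + 3 ≤ μ i := mod_cast (by lia : ⌊mean μ⌋ + 3 ≤ μ i)
  nlinarith [succ_mul_sub_mean_le_depth hμ i, i.val.cast_nonneg (α := ℚ)]

lemma apply_le_floor_mean_add_one (hμ : Antitone μ) (hlt : depth μ < 2) {i : Fin n}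
    (hi : 0 < i.val) : μ i ≤ ⌊mean μ⌋ + 1 := by
  by_contra! h
  have hmean := Int.lt_floor_add_one (mean μ)
  have hi' : (1 : ℚ) ≤ i.val := mod_cast hi
  have hμi : (⌊mean μ⌋ : ℚ) + 2 ≤ μ i := mod_cast (by lia : ⌊mean μ⌋ + 2 ≤ μ i)
  nlinarith [succ_mul_sub_mean_le_depth hμ i]

lemma floor_mean_sub_one_le_apply (hμ : Antitone μ) (hlt : depth μ < 2) (i : Fin n) :
    ⌊mean μ⌋ - 1 ≤ μ i := by
  by_contra! h
  have hmean := Int.floor_le (mean μ)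
  have hin : (i.val : ℚ) + 1 ≤ n := mod_cast i.isLt
  have hμi : (μ i : ℚ) + 2 ≤ ⌊mean μ⌋ := mod_cast (by lia : μ i + 2 ≤ ⌊mean μ⌋)
  nlinarith [sub_mul_mean_sub_le_depth hμ i]

lemma floor_mean_le_apply (hμ : Antitone μ) (hlt : depth μ < 2) {i : Fin n}
    (hi : i.val + 1 < n) : ⌊mean μ⌋ ≤ μ i := by
  by_contra! h
  have hmean := Int.floor_le (mean μ)
  have hin : (i.val : ℚ) + 2 ≤ n := mod_cast hi
  have hμi : (μ i : ℚ) + 1 ≤ ⌊mean μ⌋ := mod_cast h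
  nlinarith [sub_mul_mean_sub_le_depth hμ i]

end Depth

/-- The shape of the vector `(1^p, 0^q) + ε e₁ - η eₙ` with `p + q = n`, `p, q ≥ 1` and
`ε, η ∈ {0, 1}`: up to a constant, the only vectors that can have depth in `(0, 2)`. -/
structure StepShape (n : ℕ) where
  p : ℕ
  q : ℕ
  ε : ℕ
  η : ℕ
  p_pos : 0 < p
  q_pos : 0 < q
  add_eq : p + q = n
  ε_le : ε ≤ 1
  η_le : η ≤ 1

namespace StepShape

variable {n : ℕ} (s : StepShape n)

/-- The vector `(1^p, 0^q) + ε e₁ - η eₙ` of a shape. -/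
def toVec : Fin n → ℤ := fun i =>
  (if (i : ℕ) < s.p then 1 else 0) + (if (i : ℕ) = 0 then (s.ε : ℤ) else 0) -
    (if (i : ℕ) = n - 1 then (s.η : ℤ) else 0)

/-- The shape of the dual vector. -/
def dual : StepShape n :=
  ⟨s.q, s.p, s.η, s.ε, s.q_pos, s.p_pos, (add_comm _ _).trans s.add_eq, s.η_le, s.ε_le⟩

lemma dualVec_toVec (i : Fin n) : dualVec s.toVec i = s.dual.toVec i - 1 := by
  have := s.add_eq
  simp only [dualVec, toVec, dual, Fin.val_rev]
  split_ifs <;> lia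

lemma dualVec_sub_const_eq_toVec_dual {μ : Fin n → ℤ} {k : ℤ}
    (h : (fun i => μ i - k) = s.toVec) :
    (fun i => dualVec μ i - (-1 - k)) = s.dual.toVec := by
  funext i
  have hi := s.dualVec_toVec i
  simp only [← h, dualVec] at hi ⊢
  lia

lemma antitone_toVec : Antitone s.toVec := by
  intro i j hij
  have := s.p_pos
  have := s.q_pos
  have := s.add_eq
  simp only [toVec]
  split_ifs <;> lia

lemma natCast_mul_mean_toVec : n * mean s.toVec = s.p + s.ε - s.η := by
  have := s.p_pos
  have := s.q_pos
  have := s.add_eq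
  simp only [natCast_mul_mean, toVec, Int.cast_sub, Int.cast_add, Int.cast_ite, Int.cast_one,
    Int.cast_zero, Int.cast_natCast, sum_sub_distrib, sum_add_distrib]
  rw [sum_ite_val_lt (by lia), sum_ite_val_eq (by lia), sum_ite_val_eq (by lia), mul_one]

lemma mean_toVec_mem_Icc : mean s.toVec ∈ Set.Icc (0 : ℚ) 1 := by
  have hmean := s.natCast_mul_mean_toVec
  have hn : (s.p : ℚ) + s.q = n := mod_cast s.add_eq
  have hp : (1 : ℚ) ≤ s.p := mod_cast s.p_pos
  have hq : (1 : ℚ) ≤ s.q := mod_cast s.q_pos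
  have hε : (s.ε : ℚ) ≤ 1 := mod_cast s.ε_le
  have hη : (s.η : ℚ) ≤ 1 := mod_cast s.η_le
  constructor <;> nlinarith [s.ε.cast_nonneg (α := ℚ), s.η.cast_nonneg (α := ℚ)]

lemma posPart_toVec_sub_mean (i : Fin n) :
    ((s.toVec i : ℚ) - mean s.toVec)⁺ =
      (if (i : ℕ) < s.p then 1 - mean s.toVec else 0) + (if (i : ℕ) = 0 then (s.ε : ℚ) else 0) := by
  obtain ⟨hmean₀, hmean₁⟩ := s.mean_toVec_mem_Icc
  have := s.p_pos
  have := s.q_pos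
  have := s.add_eq
  by_cases hi : (i : ℕ) < s.p
  · have hval : s.toVec i = 1 + if (i : ℕ) = 0 then (s.ε : ℤ) else 0 := by
      simp only [toVec, if_pos hi, if_neg (by lia : (i : ℕ) ≠ n - 1), sub_zero]
    have hle : 1 ≤ (s.toVec i : ℚ) := by
      rw [hval]
      exact mod_cast le_add_of_nonneg_right (by positivity)
    rw [posPart_of_nonneg (by linarith), if_pos hi, hval]
    push_cast
    ring
  · have hle : (s.toVec i : ℚ) ≤ 0 := by
      simp only [toVec, if_neg hi, if_neg (by lia : (i : ℕ) ≠ 0), zero_add, zero_sub]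
      exact mod_cast neg_nonpos.2 (by positivity)
    rw [posPart_of_nonpos (by linarith), if_neg hi, if_neg (by lia), add_zero]

lemma natCast_mul_depth_toVec : n * depth s.toVec = s.p * s.q + s.q * s.ε + s.p * s.η := by
  have := s.p_pos
  have := s.add_eq
  have hdepth : depth s.toVec = s.p * (1 - mean s.toVec) + s.ε := by
    simp only [depth_eq_sum_posPart s.antitone_toVec, posPart_toVec_sub_mean, sum_add_distrib]
    rw [sum_ite_val_lt (by lia), sum_ite_val_eq (by lia)]
  have hn : (n : ℚ) = s.p + s.q := mod_cast s.add_eq.symm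
  calc n * depth s.toVec
      = s.p * (n - n * mean s.toVec) + n * s.ε := by rw [hdepth]; ring
    _ = s.p * s.q + s.q * s.ε + s.p * s.η := by rw [natCast_mul_mean_toVec, hn]; ring

/-- The shapes of the vectors in the classification. -/
def IsTabulated : Prop :=
  (s.p = 1 ∧ s.ε = 1 ∧ s.η = 1) ∨
  (3 ≤ n ∧ s.p = 1 ∧ s.ε = 1 ∧ s.η = 0) ∨
  (3 ≤ n ∧ s.p = 2 ∧ s.ε = 0 ∧ s.η = 1) ∨
  (5 ≤ n ∧ s.p = 2 ∧ s.ε = 0 ∧ s.η = 0) ∨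
  (n = 5 ∧ s.p = 2 ∧ s.ε = 1 ∧ s.η = 0) ∨
  ((n = 6 ∨ n = 7 ∨ n = 8) ∧ s.p = 3 ∧ s.ε = 0 ∧ s.η = 0)

lemma isTabulated_or_dual_iff : s.IsTabulated ∨ s.dual.IsTabulated ↔
    n < s.p * s.q + s.q * s.ε + s.p * s.η ∧ s.p * s.q + s.q * s.ε + s.p * s.η < 2 * n := by
  obtain ⟨p, q, ε, η, hp, hq, rfl, hε, hη⟩ := s
  simp only [IsTabulated, dual]
  rcases le_or_gt p 3 with hp3 | hp3
  · interval_cases p <;> interval_cases ε <;> interval_cases η <;> lia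
  rcases le_or_gt q 3 with hq3 | hq3
  · interval_cases q <;> interval_cases ε <;> interval_cases η <;> lia
  have hlarge : 2 * (p + q) ≤ p * q := by nlinarith
  omega

lemma one_lt_depth_toVec_and_lt_two_iff :
    1 < depth s.toVec ∧ depth s.toVec < 2 ↔ s.IsTabulated ∨ s.dual.IsTabulated := by
  have hn : (0 : ℚ) < n := mod_cast s.add_eq ▸ Nat.add_pos_left s.p_pos s.q
  rw [isTabulated_or_dual_iff, ← mul_lt_mul_iff_right₀ hn, ← mul_lt_mul_iff_right₀ hn (c := 2),
    natCast_mul_depth_toVec, mul_one, mul_comm (n : ℚ) 2]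
  norm_cast

end StepShape

lemma exists_sub_const_eq_toVec {n : ℕ} {μ : Fin n → ℤ} (hμ : Antitone μ) (hpos : 0 < depth μ)
    (hlt : depth μ < 2) : ∃ (k : ℤ) (s : StepShape n), (fun i => μ i - k) = s.toVec := by
  have hn : 0 < n := by
    rcases n.eq_zero_or_pos with rfl | hn
    · simp [depth] at hpos
    · exact hn
  have hn_pred : n - 1 < n := by lia
  set k := ⌊mean μ⌋
  set p := #{i | k + 1 ≤ μ i}
  have lt_p_iff (i : Fin n) : i.val < p ↔ k + 1 ≤ μ i :=
    Tuple.lt_card_ge_iff_apply_ge_of_antitone hμ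
  have hfirst : k + 1 ≤ μ ⟨0, hn⟩ := Int.floor_lt.2 (mean_lt_apply_zero hμ hn hpos)
  have hlast : μ ⟨n - 1, hn_pred⟩ ≤ k := Int.le_floor.2 (apply_last_le_mean hμ hn)
  have hp : 0 < p := (lt_p_iff ⟨0, hn⟩).2 hfirst
  have hpn : p ≤ n - 1 := not_lt.1 <| (lt_p_iff ⟨n - 1, hn_pred⟩).not.2 (by lia)
  have hfirst' : μ ⟨0, hn⟩ ≤ k + 2 := apply_le_floor_mean_add_two hμ hlt _
  have hlast' : k - 1 ≤ μ ⟨n - 1, hn_pred⟩ := floor_mean_sub_one_le_apply hμ hlt _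
  refine ⟨k, ⟨p, n - p, (μ ⟨0, hn⟩ - k - 1).toNat, (k - μ ⟨n - 1, hn_pred⟩).toNat,
    hp, by lia, by lia, by lia, by lia⟩, funext fun i => ?_⟩
  have hi := lt_p_iff i
  simp only [StepShape.toVec]
  rcases eq_or_ne i ⟨0, hn⟩ with rfl | hi₀
  · grind
  rcases eq_or_ne i ⟨n - 1, hn_pred⟩ with rfl | hi₁
  · grind
  have hne_zero : i.val ≠ 0 := fun h => hi₀ (Fin.ext h)
  have hne_last : i.val ≠ n - 1 := fun h => hi₁ (Fin.ext h)
  have hupper : μ i ≤ k + 1 := apply_le_floor_mean_add_one hμ hlt (by lia)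
  have hlower : k ≤ μ i := floor_mean_le_apply hμ hlt (by lia)
  split_ifs <;> lia

/-- `ν` is one of the vectors of the classification. -/
def IsTabulatedVec {n : ℕ} (ν : Fin n → ℤ) : Prop :=
  ν = (fun i : Fin n => if (i : ℕ) = 0 then 2 else if (i : ℕ) = n - 1 then -1 else 0) ∨
  (3 ≤ n ∧ ν = fun i : Fin n => if (i : ℕ) = 0 then 2 else 0) ∨
  (3 ≤ n ∧ ν = fun i : Fin n => if (i : ℕ) = n - 1 then -1 else if (i : ℕ) ≤ 1 then 1 else 0) ∨
  (5 ≤ n ∧ ν = fun i : Fin n => if (i : ℕ) ≤ 1 then 1 else 0) ∨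
  (n = 5 ∧ ν = fun i : Fin n => if (i : ℕ) = 0 then 2 else if (i : ℕ) = 1 then 1 else 0) ∨
  ((n = 6 ∨ n = 7 ∨ n = 8) ∧ ν = fun i : Fin n => if (i : ℕ) ≤ 2 then 1 else 0)

lemma StepShape.IsTabulated.isTabulatedVec {n : ℕ} {s : StepShape n} (hs : s.IsTabulated) :
    IsTabulatedVec s.toVec := by
  have := s.add_eq
  have := s.q_pos
  unfold IsTabulatedVec
  rcases hs with ⟨hp, hε, hη⟩ | ⟨hn, hp, hε, hη⟩ | ⟨hn, hp, hε, hη⟩ | ⟨hn, hp, hε, hη⟩ |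
    ⟨hn, hp, hε, hη⟩ | ⟨hn, hp, hε, hη⟩
  on_goal 1 => left
  on_goal 2 => refine .inr <| .inl ⟨hn, ?_⟩
  on_goal 3 => refine .inr <| .inr <| .inl ⟨hn, ?_⟩
  on_goal 4 => refine .inr <| .inr <| .inr <| .inl ⟨hn, ?_⟩
  on_goal 5 => refine .inr <| .inr <| .inr <| .inr <| .inl ⟨hn, ?_⟩
  on_goal 6 => refine .inr <| .inr <| .inr <| .inr <| .inr ⟨hn, ?_⟩
  all_goals
    funext i
    simp only [toVec, hp, hε, hη]
    split_ifs <;> lia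

lemma IsTabulatedVec.exists_eq_toVec {n : ℕ} (hn : 2 ≤ n) {ν : Fin n → ℤ}
    (hν : IsTabulatedVec ν) : ∃ s : StepShape n, s.IsTabulated ∧ ν = s.toVec := by
  rcases hν with rfl | ⟨hn', rfl⟩ | ⟨hn', rfl⟩ | ⟨hn', rfl⟩ | ⟨hn', rfl⟩ | ⟨hn', rfl⟩
  on_goal 1 => use ⟨1, n - 1, 1, 1, by lia, by lia, by lia, by lia, by lia⟩
  on_goal 2 => use ⟨1, n - 1, 1, 0, by lia, by lia, by lia, by lia, by lia⟩
  on_goal 3 => use ⟨2, n - 2, 0, 1, by lia, by lia, by lia, by lia, by lia⟩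
  on_goal 4 => use ⟨2, n - 2, 0, 0, by lia, by lia, by lia, by lia, by lia⟩
  on_goal 5 => use ⟨2, n - 2, 1, 0, by lia, by lia, by lia, by lia, by lia⟩
  on_goal 6 => use ⟨3, n - 3, 0, 0, by lia, by lia, by lia, by lia, by lia⟩
  all_goals
    refine ⟨by simp [StepShape.IsTabulated, *], funext fun i => ?_⟩
    simp only [StepShape.toVec]
    split_ifs <;> lia

theorem stmt0 (n : ℕ) (hn : 2 ≤ n) (μ : Fin n → ℤ) (hμ : Antitone μ) :
    (1 < depth μ ∧ depth μ < 2) ↔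
      ∃ (k : ℤ) (ν : Fin n → ℤ),
        ((fun i => μ i - k) = ν ∨ (fun i => dualVec μ i - k) = ν) ∧
        (ν = (fun i : Fin n => if (i : ℕ) = 0 then 2 else if (i : ℕ) = n - 1 then -1 else 0) ∨
         (3 ≤ n ∧ ν = fun i : Fin n => if (i : ℕ) = 0 then 2 else 0) ∨
         (3 ≤ n ∧ ν = fun i : Fin n => if (i : ℕ) = n - 1 then -1 else if (i : ℕ) ≤ 1 then 1 else 0) ∨
         (5 ≤ n ∧ ν = fun i : Fin n => if (i : ℕ) ≤ 1 then 1 else 0) ∨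
         (n = 5 ∧ ν = fun i : Fin n => if (i : ℕ) = 0 then 2 else if (i : ℕ) = 1 then 1 else 0) ∨
         ((n = 6 ∨ n = 7 ∨ n = 8) ∧ ν = fun i : Fin n => if (i : ℕ) ≤ 2 then 1 else 0)) := by
  change _ ↔ ∃ k ν, (_ ∨ _) ∧ IsTabulatedVec ν
  constructor
  · rintro ⟨hgt, hlt⟩
    obtain ⟨k, s, hs⟩ := exists_sub_const_eq_toVec hμ (one_pos.trans hgt) hlt
    rw [← depth_sub_const hμ k, hs] at hgt hlt
    rcases s.one_lt_depth_toVec_and_lt_two_iff.1 ⟨hgt, hlt⟩ with htab | htab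
    · exact ⟨k, _, .inl hs, htab.isTabulatedVec⟩
    · exact ⟨-1 - k, _, .inr (s.dualVec_sub_const_eq_toVec_dual hs), htab.isTabulatedVec⟩
  · rintro ⟨k, ν, hμν, hν⟩
    obtain ⟨s, hs, rfl⟩ := hν.exists_eq_toVec hn
    have hdepth : depth μ = depth s.toVec := by
      rcases hμν with h | h
      · rw [← h, depth_sub_const hμ]
      · rw [← h, depth_sub_const (antitone_dualVec hμ), depth_dualVec hμ]
    rw [hdepth]
    exact s.one_lt_depth_toVec_and_lt_two_iff.2 (.inl hs)
end

section
/- Let n ≥ 1, let i, j ∈ {0,…,n} and k ∈ {1,…,n+1}, and define the following elements of the symmetric group S_{n+1}: w₁ := s₁s₂⋯sᵢ, w₂ := s₁s₂⋯s_j, w₃ := sₙs_{n−1}⋯s_k (with the convention that an empty product is the identity, i.e. w₁ = 1 if i = 0, w₂ = 1 if j = 0, w₃ = 1 if k = n+1). Then there exist v₁, v₂, v₃ ∈ S_{n+1} satisfying: v₁⁻¹(m) > v₁⁻¹(i+1) for all m > i+1; v₂⁻¹(m) > v₂⁻¹(j+1) for all m > j+1; v₃⁻¹(m) < v₃⁻¹(k)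 for all m < k; such that at least one of the following holds: (i) there exists t ∈ {1,…,n} such that each of the three elements v₃⁻¹w₁v₁, v₁⁻¹w₂v₂, v₂⁻¹w₃v₃ lies in the subgroup of S_{n+1} generated by the simple transpositions s_ℓ with ℓ ∈ {1,…,n} \ {t}; or (ii) there exist pairwise disjoint subsets I₁, I₂, I₃ ⊆ {1,…,n} such that v₃⁻¹w₁v₁ is a product of the simple transpositions s_ℓ, ℓ ∈ I₁, each used exactly once (in some order), and similarly v₁⁻¹w₂v₂ for I₂ and v₂⁻¹w₃v₃ for I₃. -/
/-- The simple transposition of `Fin N` swapping the 0-indexed positions `i` and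
`i+1` (the identity if `i + 1 ≥ N`).  `simpleT N (ℓ-1)` is the paper's `s_ℓ`. -/
def simpleT (N : ℕ) (i : ℕ) : Equiv.Perm (Fin N) :=
  if h : i + 1 < N then Equiv.swap ⟨i, by omega⟩ ⟨i + 1, h⟩ else 1

/-- `w₁ = s₁ s₂ ⋯ sᵢ ∈ S_{n+1}` (0-indexed product `s₀ s₁ ⋯ s_{i-1}`). -/
def wUp (n i : ℕ) : Equiv.Perm (Fin (n + 1)) :=
  ((List.range i).map (simpleT (n + 1))).prod

/-- `w₃ = sₙ s_{n−1} ⋯ s_k ∈ S_{n+1}` (0-indexed product `s_{n-1} s_{n-2} ⋯ s_{k-1}`). -/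
def wDown (n k : ℕ) : Equiv.Perm (Fin (n + 1)) :=
  ((List.range (n + 1 - k)).map fun u => simpleT (n + 1) (n - 1 - u)).prod

/-- The set of simple transpositions `s_ℓ` of `S_{n+1}` with 0-indexed
`ℓ ∈ {0,…,n−1} \ {t}`. -/
def genSet (n t : ℕ) : Set (Equiv.Perm (Fin (n + 1))) :=
  {g | ∃ ℓ, ℓ < n ∧ ℓ ≠ t ∧ g = simpleT (n + 1) ℓ}

/-! Put `w₁ = wUp n i`, `w₂ = wUp n j`, `w₃ = wDown n (k + 1)`, `w = w₁ * w₂ * w₃` and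
`a = w₁ 0`.

If a proper nonempty set `C` is stable under `w`, let `v₁`, `v₂`, `v₃` list first the elements of
`w₁ ⁻¹' C`, `w₂ ⁻¹' (w₁ ⁻¹' C)` and `C`. The three conjugates then preserve the initial segment of
length `C.ncard`, so they lie in a common maximal parabolic subgroup. When `w` is not a single
cycle, such a `C` can be chosen compatibly with the order conditions: it is the union of the cycles
of `0` and `a` if this union is proper, and otherwise the one of these two cycles that does not
contain `k`.

If `w` is a single cycle, choose `v` with `w * v = v * finRotate (n + 1)`; then `v⁻¹` records the
position along the cycle, starting from `v 0`, so `v⁻¹ x < v⁻¹ y` holds whenever `y`, but not `x`,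
has some property that `w` preserves until the cycle returns to `v 0`. Making two of the
conjugates trivial forces the remaining one to be `finRotate (n + 1)`, which is the Coxeter element
`wUp n n`. The order conditions hold when the cycle starts at `a` and the first and second
conjugates are trivial (`i ≤ j`), or when it starts at `0` and the first and third conjugates are
trivial (`j < i`). -/

open Equiv Equiv.Perm

section SimpleTranspositions

variable {n i k l : ℕ}

theorem val_simpleT (hl : l < n) (x : Fin (n + 1)) :
    (simpleT (n + 1) l x : ℕ) =
      if (x : ℕ) = l then l + 1 else if (x : ℕ) = l + 1 then l else x := by
  rw [simpleT, dif_pos (by omega), swap_apply_def]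
  simp only [Fin.ext_iff]
  split_ifs <;> rfl

theorem isSwap_simpleT (hl : l < n) : (simpleT (n + 1) l).IsSwap :=
  ⟨⟨l, by omega⟩, ⟨l + 1, by omega⟩, by simp, by rw [simpleT, dif_pos (by omega)]⟩

theorem wUp_succ (n i : ℕ) : wUp n (i + 1) = wUp n i * simpleT (n + 1) i := by
  simp [wUp, List.range_succ]

theorem val_wUp (hi : i ≤ n) (x : Fin (n + 1)) :
    (wUp n i x : ℕ) = if (x : ℕ) < i then (x : ℕ) + 1 else if (x : ℕ) = i then 0 else x := by
  induction i generalizing x with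
  | zero => simp +contextual [wUp]
  | succ i ih =>
    rw [wUp_succ, Perm.mul_apply, ih (by omega), val_simpleT (by omega)]
    split_ifs <;> omega

theorem wUp_self (i : Fin (n + 1)) : wUp n i i = 0 :=
  Fin.ext (by simp [val_wUp i.is_le])

theorem wUp_of_lt {i m : Fin (n + 1)} (h : i < m) : wUp n i m = m :=
  Fin.ext (by grind [val_wUp i.is_le])

theorem wUp_eq_finRotate (n : ℕ) : wUp n n = finRotate (n + 1) := by
  ext x
  rw [val_wUp le_rfl, coe_finRotate]
  grind [Fin.ext_iff]

theorem wDown_eq_wDown_succ_mul (hk : k < n) :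
    wDown n (k + 1) = wDown n (k + 2) * simpleT (n + 1) k := by
  rw [wDown, show n + 1 - (k + 1) = n + 1 - (k + 2) + 1 by omega, List.range_succ]
  simp [wDown, show n - 1 - (n - (k + 1)) = k by omega]

theorem val_wDown (hk : k ≤ n) (x : Fin (n + 1)) :
    (wDown n (k + 1) x : ℕ) =
      if (x : ℕ) < k then (x : ℕ) else if (x : ℕ) = k then n else x - 1 := by
  induction hk using Nat.decreasingInduction generalizing x with
  | self =>
    simp only [wDown, Nat.sub_self, List.range_zero, List.map_nil, List.prod_nil, Perm.one_apply]
    split_ifs <;> omega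
  | of_succ k hk ih =>
    rw [wDown_eq_wDown_succ_mul hk, Perm.mul_apply, ih, val_simpleT hk]
    split_ifs <;> omega

end SimpleTranspositions

section MaximalParabolic

variable {n t : ℕ}

theorem mem_orbit_closure_genSet {x y : Fin (n + 1)} (hxy : x ≤ y)
    (h : (x : ℕ) ≤ t ↔ (y : ℕ) ≤ t) : y ∈ MulAction.orbit (Subgroup.closure (genSet n t)) x := by
  induction y using Fin.induction with
  | zero => simp [Fin.le_zero_iff.mp hxy]
  | succ y ih =>
    rcases hxy.eq_or_lt with rfl | hlt
    · exact MulAction.mem_orbit_self _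
    have hs : simpleT (n + 1) y ∈ Subgroup.closure (genSet n t) :=
      Subgroup.subset_closure ⟨y, y.2, by grind, rfl⟩
    have hy : simpleT (n + 1) y y.castSucc = y.succ := Fin.ext (by simp [val_simpleT y.2])
    rw [← hy]
    exact MulAction.mem_orbit_of_mem_orbit ⟨_, hs⟩ (ih (by grind) (by grind))

theorem mem_closure_genSet {f : Perm (Fin (n + 1))}
    (hf : ∀ x, (f x : ℕ) ≤ t ↔ (x : ℕ) ≤ t) : f ∈ Subgroup.closure (genSet n t) := by
  rw [mem_closure_isSwap]
  · refine ⟨Set.toFinite _, fun x => ?_⟩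
    rcases le_total x (f x) with hx | hx
    · exact mem_orbit_closure_genSet hx (hf x).symm
    · exact MulAction.mem_orbit_symm.mp (mem_orbit_closure_genSet hx (hf x))
  · rintro _ ⟨l, hl, -, rfl⟩
    exact isSwap_simpleT hl

end MaximalParabolic

section FrontPerm

theorem ncard_preimage_perm {α : Type*} (w : Perm α) (A : Set α) : (w ⁻¹' A).ncard = A.ncard :=
  congrArg ENat.toNat (Set.encard_preimage_of_bijective w.bijective A)

open scoped Classical in
/-- The permutation whose one-line notation lists the elements of `A` increasingly, followed by
the remaining elements increasingly. -/
noncomputable def frontPerm {N : ℕ} (A : Set (Fin N)) : Perm (Fin N) :=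
  Tuple.sort fun a => a ∉ A

theorem frontPerm_mem_iff {N : ℕ} {A : Set (Fin N)} (p : Fin N) :
    frontPerm A p ∈ A ↔ (p : ℕ) < A.ncard := by
  classical
  have hmono : Monotone fun q => frontPerm A q ∉ A := Tuple.monotone_sort fun a => a ∉ A
  have hcard : A.ncard = Finset.card {q | (frontPerm A q ∉ A) ≤ False} := by
    rw [← ncard_preimage_perm (frontPerm A), ← Set.ncard_coe_finset]
    simp [Set.preimage]
  rw [hcard, Tuple.lt_card_le_iff_apply_le_of_monotone hmono]
  simp

theorem frontPerm_inv_lt_inv {N : ℕ} {A : Set (Fin N)} {a b : Fin N} (hab : a < b)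
    (h : b ∈ A → a ∈ A) : (frontPerm A)⁻¹ a < (frontPerm A)⁻¹ b := by
  classical
  obtain ⟨hmono, hstable⟩ := Tuple.eq_sort_iff.mp (rfl : frontPerm A = Tuple.sort fun a => a ∉ A)
  by_contra! hle
  have hlt : (frontPerm A)⁻¹ b < (frontPerm A)⁻¹ a :=
    hle.lt_of_ne fun he => hab.ne' ((frontPerm A)⁻¹.injective he)
  have hba : b ∉ A → a ∉ A := by simpa using hmono hle
  have hlt' : b < a := by
    simpa using hstable _ _ hlt (by simpa using ⟨hba, mt h⟩)
  exact hab.asymm hlt'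

theorem frontPerm_conj_mem_closure_genSet {n t : ℕ} (w : Perm (Fin (n + 1)))
    {A : Set (Fin (n + 1))} (hA : A.ncard = t + 1) :
    (frontPerm A)⁻¹ * w * frontPerm (w ⁻¹' A) ∈ Subgroup.closure (genSet n t) := by
  have mem_iff (B : Set (Fin (n + 1))) (hB : B.ncard = t + 1) (x : Fin (n + 1)) :
      (x : ℕ) ≤ t ↔ frontPerm B x ∈ B := by
    rw [frontPerm_mem_iff, hB, Nat.lt_succ_iff]
  refine mem_closure_genSet fun x => ?_
  rw [mem_iff A hA, mem_iff (w ⁻¹' A) ((ncard_preimage_perm w A).trans hA)]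
  simp

end FrontPerm

/-- The order conditions on `v₁`, `v₂`, `v₃` in the theorem, with letters indexed from `0`, so that
the `k` of the theorem is `k + 1` here. -/
structure OrderConstraints {N : ℕ} (i j k : Fin N) (v₁ v₂ v₃ : Perm (Fin N)) : Prop where
  lt₁ : ∀ m, i < m → v₁⁻¹ i < v₁⁻¹ m
  lt₂ : ∀ m, j < m → v₂⁻¹ j < v₂⁻¹ m
  lt₃ : ∀ m, m < k → v₃⁻¹ m < v₃⁻¹ k

/-- A proper nonempty set stable under `w₁ * w₂ * w₃` that gives rise to the reducible
alternative (i): the permutations listing first `w₁ ⁻¹' C`, `w₂ ⁻¹' (w₁ ⁻¹' C)` and `C`,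
respectively, satisfy the order constraints. -/
structure IsAdmissible {N : ℕ} (w₁ w₂ w₃ : Perm (Fin N)) (i j k : Fin N) (C : Set (Fin N)) :
    Prop where
  nonempty : C.Nonempty
  ne_univ : C ≠ Set.univ
  apply_mem_iff : ∀ x, w₁ (w₂ (w₃ x)) ∈ C ↔ x ∈ C
  mem₁ : ∀ m, i < m → w₁ m ∈ C → w₁ i ∈ C
  mem₂ : ∀ m, j < m → w₁ (w₂ m) ∈ C → w₁ (w₂ j) ∈ C
  mem₃ : ∀ m, m < k → k ∈ C → m ∈ C

theorem IsAdmissible.exists_conj_mem_closure_genSet {n : ℕ} {w₁ w₂ w₃ : Perm (Fin (n + 1))}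
    {i j k : Fin (n + 1)} {C : Set (Fin (n + 1))} (hC : IsAdmissible w₁ w₂ w₃ i j k C) :
    ∃ v₁ v₂ v₃, OrderConstraints i j k v₁ v₂ v₃ ∧ ∃ t < n,
      v₃⁻¹ * w₁ * v₁ ∈ Subgroup.closure (genSet n t) ∧
      v₁⁻¹ * w₂ * v₂ ∈ Subgroup.closure (genSet n t) ∧
      v₂⁻¹ * w₃ * v₃ ∈ Subgroup.closure (genSet n t) := by
  obtain ⟨t, ht⟩ : ∃ t, C.ncard = t + 1 :=
    Nat.exists_eq_add_one.mpr ((Set.ncard_pos C.toFinite).mpr hC.nonempty)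
  have hlt : C.ncard < n + 1 := by simpa using Set.ncard_lt_card hC.ne_univ
  set C₁ := w₁ ⁻¹' C
  set C₂ := w₂ ⁻¹' C₁
  have ht₁ : C₁.ncard = t + 1 := (ncard_preimage_perm w₁ C).trans ht
  have ht₂ : C₂.ncard = t + 1 := (ncard_preimage_perm w₂ C₁).trans ht₁
  have hC₃ : w₃ ⁻¹' C₂ = C := Set.ext hC.apply_mem_iff
  refine ⟨frontPerm C₁, frontPerm C₂, frontPerm C, ⟨?_, ?_, ?_⟩, t, by omega, ?_, ?_, ?_⟩
  · exact fun m hm => frontPerm_inv_lt_inv hm (hC.mem₁ m hm)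
  · exact fun m hm => frontPerm_inv_lt_inv hm (hC.mem₂ m hm)
  · exact fun m hm => frontPerm_inv_lt_inv hm (hC.mem₃ m hm)
  · exact frontPerm_conj_mem_closure_genSet w₁ ht
  · exact frontPerm_conj_mem_closure_genSet w₂ ht₁
  · simpa only [hC₃] using frontPerm_conj_mem_closure_genSet w₃ ht₂

section FullCycle

variable {n : ℕ} {w v : Perm (Fin (n + 1))}

theorem exists_mul_eq_mul_finRotate (hw : w.IsCycleOn Set.univ) (b : Fin (n + 1)) :
    ∃ v : Perm (Fin (n + 1)), v 0 = b ∧ w * v = v * finRotate (n + 1) := by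
  have hpow {k l : ℕ} : (w ^ k) b = (w ^ l) b ↔ k ≡ l [MOD n + 1] := by
    rw [← Finset.coe_univ] at hw
    simpa using hw.pow_apply_eq_pow_apply (Finset.mem_univ b)
  have hinj : Function.Injective fun p : Fin (n + 1) => (w ^ (p : ℕ)) b := fun p q hpq =>
    Fin.ext ((hpow.mp hpq).eq_of_lt_of_lt p.2 q.2)
  refine ⟨ofBijective _ (Finite.injective_iff_bijective.mp hinj), by simp, Perm.ext fun p => ?_⟩
  have hmod : (p : ℕ) + 1 ≡ (finRotate (n + 1) p : ℕ) [MOD n + 1] := by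
    simp [finRotate_apply, Fin.val_add, Nat.ModEq]
  simpa [pow_succ'] using hpow.mpr hmod

theorem inv_apply_pos {x : Fin (n + 1)} (hx : x ≠ v 0) : 0 < v⁻¹ x :=
  Fin.pos_of_ne_zero fun h => hx (inv_eq_iff_eq.mp h)

theorem inv_apply_lt_inv_apply (hv : w * v = v * finRotate (n + 1)) {P : Fin (n + 1) → Prop}
    (hP : ∀ x, P x → w x ≠ v 0 → P (w x)) {x y : Fin (n + 1)} (hx : ¬P x) (hy : P y) :
    v⁻¹ x < v⁻¹ y := by
  have propagate (p q : Fin (n + 1)) (hpq : p ≤ q) (hp : P (v p)) : P (v q) := by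
    induction q using Fin.induction with
    | zero => rwa [Fin.le_zero_iff.mp hpq] at hp
    | succ q ih =>
      rcases hpq.eq_or_lt with rfl | hlt
      · exact hp
      have hwq : w (v q.castSucc) = v q.succ := by
        simpa using DFunLike.congr_fun hv q.castSucc
      rw [← hwq]
      refine hP _ (ih (by grind)) ?_
      simp [hwq]
  by_contra! hle
  exact hx (by simpa using propagate _ _ hle (by simpa using hy))

end FullCycle

/-- The product `w₁ * w₂ * w₃` of the theorem, whose `k` is `k + 1` here. Its conjugate by `v₃` is
the product of the three conjugates in the theorem, and whether it is a single cycle decides between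
the two alternatives. -/
def monodromy {n : ℕ} (i j k : Fin (n + 1)) : Perm (Fin (n + 1)) :=
  wUp n i * wUp n j * wDown n (k + 1)

section Monodromy

variable {n : ℕ} {i j k x : Fin (n + 1)}

theorem monodromy_apply (i j k x : Fin (n + 1)) :
    monodromy i j k x = wUp n i (wUp n j (wDown n (k + 1) x)) := rfl

theorem monodromy_lt (hi : i < k) (hj : j < k) (hx : x < k) : monodromy i j k x < k := by
  grind [monodromy_apply, val_wUp, val_wDown]

theorem monodromy_castSucc {x : Fin n} (hk : k ≤ i ∨ k ≤ j) (hx : i < x.castSucc ∨ j < x.castSucc)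
    (hxk : x.castSucc < k) : monodromy i j k x.castSucc = x.succ := by
  grind [monodromy_apply, val_wUp, val_wDown]

theorem monodromy_succ {x : Fin n} (hi : i < x.castSucc) (hj : j < x.castSucc) (hk : k < x.succ) :
    monodromy i j k x.succ = x.castSucc := by
  grind [monodromy_apply, val_wUp, val_wDown]

theorem monodromy_self (hi : i < Fin.last n) (hj : j < Fin.last n) :
    monodromy i j k k = Fin.last n := by
  grind [monodromy_apply, val_wUp, val_wDown]

theorem monodromy_eq_self_of_lt_of_le (hi : i < x) (hj : x ≤ j) (hk : k < x) :
    monodromy i j k x = x := by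
  grind [monodromy_apply, val_wUp, val_wDown]

theorem monodromy_eq_self_of_le_of_lt (hi : x ≤ i) (hj : j < wDown n (k + 1) x) (hk : k < x) :
    monodromy i j k x = x := by
  grind [monodromy_apply, val_wUp, val_wDown]

theorem eq_or_lt_monodromy (hk : k ≤ i ∨ k ≤ j) (hlt : monodromy i j k x < k)
    (h₀ : monodromy i j k x ≠ 0) (h₁ : monodromy i j k x ≠ wUp n i 0) :
    x = k ∨ x < monodromy i j k x := by
  grind [monodromy_apply, val_wUp, val_wDown]

theorem lt_monodromy_of_lt (hij : i ≤ j) (hx : i < x) (hw : monodromy i j k x ≠ wUp n i 0) :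
    i < monodromy i j k x := by
  grind [monodromy_apply, val_wUp, val_wDown]

theorem lt_wDown_monodromy_of_lt (hij : j < i) (hx : j < wDown n (k + 1) x)
    (hw : monodromy i j k x ≠ 0) : j < wDown n (k + 1) (monodromy i j k x) := by
  grind [monodromy_apply, val_wUp, val_wDown]

theorem lt_and_lt_monodromy_of_le (hij : i ≤ j) (hx : x = k ∨ (i < x ∧ j < x))
    (hw : monodromy i j k x ≠ wUp n i 0) : i < monodromy i j k x ∧ j < monodromy i j k x := by
  grind [monodromy_apply, val_wUp, val_wDown]

theorem lt_and_lt_monodromy_of_gt (hij : j < i) (hx : x = k ∨ (i < x ∧ j < x))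
    (hw : monodromy i j k x ≠ 0) : i < monodromy i j k x ∧ j < monodromy i j k x := by
  grind [monodromy_apply, val_wUp, val_wDown]

theorem sameCycle_monodromy_of_le (hk : k ≤ i ∨ k ≤ j) (hx : i < x ∨ j < x) (hxk : x ≤ k) :
    (monodromy i j k).SameCycle k x := by
  induction x using Fin.reverseInduction with
  | last => rw [Fin.last_le_iff.mp hxk]
  | cast x ih =>
    rcases hxk.eq_or_lt with rfl | hlt
    · rfl
    rw [← sameCycle_apply_right, monodromy_castSucc hk hx hlt]
    exact ih (by grind) (by grind)

theorem sameCycle_monodromy_of_lt (hk : k ≤ i ∨ k ≤ j) (hi : i < x) (hj : j < x) :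
    (monodromy i j k).SameCycle k x := by
  induction x using Fin.reverseInduction with
  | last => rw [← monodromy_self hi hj, sameCycle_apply_right]
  | cast x ih =>
    rw [← monodromy_succ (k := k) hi hj (by grind), sameCycle_apply_right]
    exact ih (by grind) (by grind)

theorem monodromy_eq_self_or_sameCycle_of_lt (hk : k ≤ i ∨ k ≤ j) (hx : i < x) :
    monodromy i j k x = x ∨ (monodromy i j k).SameCycle k x := by
  rcases le_or_gt x k with hxk | hkx
  · exact .inr (sameCycle_monodromy_of_le hk (.inl hx) hxk)
  rcases le_or_gt x j with hxj | hjx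
  · exact .inl (monodromy_eq_self_of_lt_of_le hx hxj hkx)
  · exact .inr (sameCycle_monodromy_of_lt hk hx hjx)

theorem monodromy_eq_self_or_sameCycle_of_lt_wDown (hk : k ≤ i ∨ k ≤ j)
    (hx : j < wDown n (k + 1) x) :
    monodromy i j k x = x ∨ (monodromy i j k).SameCycle k x := by
  have hjx : x = k ∨ j < x := by grind [val_wDown]
  rcases hjx with rfl | hjx
  · exact .inr .rfl
  rcases le_or_gt x k with hxk | hkx
  · exact .inr (sameCycle_monodromy_of_le hk (.inr hjx) hxk)
  rcases le_or_gt x i with hxi | hix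
  · exact .inl (monodromy_eq_self_of_le_of_lt hxi hx hkx)
  · exact .inr (sameCycle_monodromy_of_lt hk hix hjx)

theorem not_sameCycle_monodromy (hi : i < k) (hj : j < k) (hx : x < k) :
    ¬(monodromy i j k).SameCycle x k := by
  intro h
  obtain ⟨p, hp⟩ := h.exists_nat_pow_eq
  have hmaps : Set.MapsTo (monodromy i j k) (Set.Iio k) (Set.Iio k) :=
    fun _ => monodromy_lt hi hj
  exact (hmaps.perm_pow p hx).ne hp

theorem wUp_zero_le (i : Fin (n + 1)) : wUp n i 0 ≤ i := by
  grind [val_wUp]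

theorem le_or_le_of_sameCycle_monodromy
    (h : (monodromy i j k).SameCycle 0 k ∨ (monodromy i j k).SameCycle (wUp n i 0) k) :
    k ≤ i ∨ k ≤ j := by
  by_contra! hlt
  obtain ⟨hi, hj⟩ := hlt
  rcases h with h | h
  · exact not_sameCycle_monodromy hi hj ((Fin.zero_le i).trans_lt hi) h
  · exact not_sameCycle_monodromy hi hj ((wUp_zero_le i).trans_lt hi) h

theorem mem_of_lt_of_forall_monodromy_mem_iff (hk : k ≤ i ∨ k ≤ j) {U : Set (Fin (n + 1))}
    (hU : ∀ x, monodromy i j k x ∈ U ↔ x ∈ U) (h₀ : 0 ∈ U) (h₁ : wUp n i 0 ∈ U) (hkU : k ∈ U)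
    (hx : x < k) : x ∈ U := by
  induction x using WellFoundedLT.induction with
  | ind x ih =>
    by_cases hx₀ : x = 0
    · rwa [hx₀]
    by_cases hx₁ : x = wUp n i 0
    · rwa [hx₁]
    obtain ⟨p, rfl⟩ := (monodromy i j k).surjective x
    rw [hU]
    rcases eq_or_lt_monodromy hk hx hx₀ hx₁ with rfl | hp
    · exact hkU
    · exact ih p hp (hp.trans hx)

theorem isAdmissible_union
    (hU : {x | (monodromy i j k).SameCycle 0 x ∨ (monodromy i j k).SameCycle (wUp n i 0) x} ≠
      Set.univ) :
    IsAdmissible (wUp n i) (wUp n j) (wDown n (k + 1)) i j k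
      {x | (monodromy i j k).SameCycle 0 x ∨ (monodromy i j k).SameCycle (wUp n i 0) x} where
  nonempty := ⟨0, .inl .rfl⟩
  ne_univ := hU
  apply_mem_iff x := or_congr sameCycle_apply_right sameCycle_apply_right
  mem₁ m _ _ := .inl (by rw [wUp_self])
  mem₂ m _ _ := .inr (by rw [wUp_self])
  mem₃ m hm hkU := mem_of_lt_of_forall_monodromy_mem_iff (le_or_le_of_sameCycle_monodromy hkU)
    (fun x => or_congr sameCycle_apply_right sameCycle_apply_right) (.inl .rfl) (.inr .rfl) hkU hm

theorem isAdmissible_sameCycle_zero (h₁ : ¬(monodromy i j k).SameCycle 0 (wUp n i 0))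
    (hk₁ : (monodromy i j k).SameCycle (wUp n i 0) k) :
    IsAdmissible (wUp n i) (wUp n j) (wDown n (k + 1)) i j k
      {x | (monodromy i j k).SameCycle 0 x} where
  nonempty := ⟨0, .rfl⟩
  ne_univ h := h₁ (Set.eq_univ_iff_forall.mp h _)
  apply_mem_iff x := sameCycle_apply_right
  mem₁ m _ _ := by rw [wUp_self]; exact .rfl
  mem₂ m hm hmC := by
    have hk := le_or_le_of_sameCycle_monodromy (.inr hk₁)
    obtain ⟨x, rfl⟩ := (wDown n (k + 1)).surjective m
    have h₀x : (monodromy i j k).SameCycle 0 x := sameCycle_apply_right.mp hmC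
    rcases monodromy_eq_self_or_sameCycle_of_lt_wDown hk hm with hfix | hcyc
    · obtain rfl : 0 = x := h₀x.eq_of_right hfix
      obtain rfl : k = 0 := by grind [val_wDown]
      exact absurd hk₁.symm h₁
    · exact absurd (h₀x.trans (hk₁.trans hcyc).symm) h₁
  mem₃ m _ hk₀ := absurd (hk₀.trans hk₁.symm) h₁

theorem isAdmissible_sameCycle_wUp_zero (h₁ : ¬(monodromy i j k).SameCycle 0 (wUp n i 0))
    (hk₀ : (monodromy i j k).SameCycle 0 k) :
    IsAdmissible (wUp n i) (wUp n j) (wDown n (k + 1)) i j k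
      {x | (monodromy i j k).SameCycle (wUp n i 0) x} where
  nonempty := ⟨_, .rfl⟩
  ne_univ h := h₁ (Set.eq_univ_iff_forall.mp h _).symm
  apply_mem_iff x := sameCycle_apply_right
  mem₁ m hm hmC := by
    have hk := le_or_le_of_sameCycle_monodromy (.inl hk₀)
    rw [wUp_of_lt hm] at hmC
    rcases monodromy_eq_self_or_sameCycle_of_lt hk hm with hfix | hcyc
    · exact absurd (hmC.eq_of_right hfix) ((wUp_zero_le i).trans_lt hm).ne
    · exact absurd ((hk₀.trans hcyc).trans hmC.symm) h₁
  mem₂ m _ _ := by rw [wUp_self]; exact .rfl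
  mem₃ m _ hk₁ := absurd (hk₀.trans hk₁.symm) h₁

theorem exists_isAdmissible (h : ¬(monodromy i j k).IsCycleOn Set.univ) :
    ∃ C, IsAdmissible (wUp n i) (wUp n j) (wDown n (k + 1)) i j k C := by
  by_cases hU :
      {x | (monodromy i j k).SameCycle 0 x ∨ (monodromy i j k).SameCycle (wUp n i 0) x} = Set.univ
  · have hcover := Set.eq_univ_iff_forall.mp hU
    have h₁ : ¬(monodromy i j k).SameCycle 0 (wUp n i 0) := by
      intro h₁
      have h₀ (x : Fin (n + 1)) : (monodromy i j k).SameCycle 0 x := (hcover x).elim id h₁.trans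
      exact h ⟨Set.bijOn_univ.mpr (monodromy i j k).bijective,
        fun x _ y _ => (h₀ x).symm.trans (h₀ y)⟩
    rcases hcover k with hk₀ | hk₁
    · exact ⟨_, isAdmissible_sameCycle_wUp_zero h₁ hk₀⟩
    · exact ⟨_, isAdmissible_sameCycle_zero h₁ hk₁⟩
  · exact ⟨_, isAdmissible_union hU⟩

theorem exists_conj_eq_finRotate_of_le (hij : i ≤ j)
    (hw : (monodromy i j k).IsCycleOn Set.univ) :
    ∃ v₁ v₂ v₃, OrderConstraints i j k v₁ v₂ v₃ ∧
      v₃⁻¹ * wUp n i * v₁ = 1 ∧ v₁⁻¹ * wUp n j * v₂ = 1 ∧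
      v₂⁻¹ * wDown n (k + 1) * v₃ = finRotate (n + 1) := by
  obtain ⟨v, hv₀, hv⟩ := exists_mul_eq_mul_finRotate hw (wUp n i 0)
  have hk : k ≤ i ∨ k ≤ j :=
    le_or_le_of_sameCycle_monodromy (.inl (hw.2 (Set.mem_univ _) (Set.mem_univ _)))
  refine ⟨(wUp n i)⁻¹ * v, (wUp n j)⁻¹ * (wUp n i)⁻¹ * v, v, ⟨?_, ?_, ?_⟩, by group, by group, ?_⟩
  · intro m hm
    have h := inv_apply_lt_inv_apply hv (P := (i < ·)) (x := 0) (y := m)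
      (fun x hx hne => lt_monodromy_of_lt hij hx (hv₀ ▸ hne)) (Fin.not_lt_zero i) hm
    simpa [mul_inv_rev, wUp_self, wUp_of_lt hm] using h
  · intro m hm
    have hne : wUp n i m ≠ v 0 := by
      rw [hv₀]
      exact (wUp n i).injective.ne ((Fin.zero_le j).trans_lt hm).ne'
    simpa [mul_inv_rev, wUp_self, wUp_of_lt hm, ← hv₀] using inv_apply_pos hne
  · intro m hm
    exact inv_apply_lt_inv_apply hv (P := fun x => x = k ∨ (i < x ∧ j < x))
      (fun x hx hne => .inr (lt_and_lt_monodromy_of_le hij hx (hv₀ ▸ hne)))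
      (by grind) (.inl rfl)
  · rw [← mul_right_inj v, ← hv, monodromy]
    group

theorem exists_conj_eq_finRotate_of_gt (hij : j < i)
    (hw : (monodromy i j k).IsCycleOn Set.univ) :
    ∃ v₁ v₂ v₃, OrderConstraints i j k v₁ v₂ v₃ ∧
      v₃⁻¹ * wUp n i * v₁ = 1 ∧ v₁⁻¹ * wUp n j * v₂ = finRotate (n + 1) ∧
      v₂⁻¹ * wDown n (k + 1) * v₃ = 1 := by
  obtain ⟨v, hv₀, hv⟩ := exists_mul_eq_mul_finRotate hw 0
  have hk : k ≤ i ∨ k ≤ j :=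
    le_or_le_of_sameCycle_monodromy (.inl (hw.2 (Set.mem_univ _) (Set.mem_univ _)))
  refine ⟨(wUp n i)⁻¹ * v, wDown n (k + 1) * v, v, ⟨?_, ?_, ?_⟩, by group, ?_, by group⟩
  · intro m hm
    have hne : m ≠ v 0 := by
      rw [hv₀]
      exact ((Fin.zero_le i).trans_lt hm).ne'
    have h₀ : v.symm 0 = 0 := by rw [symm_apply_eq, hv₀]
    simpa [mul_inv_rev, wUp_self, wUp_of_lt hm, h₀] using inv_apply_pos hne
  · intro m hm
    have h := inv_apply_lt_inv_apply hv (P := (j < wDown n (k + 1) ·))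
      (x := (wDown n (k + 1))⁻¹ j) (y := (wDown n (k + 1))⁻¹ m)
      (fun x hx hne => lt_wDown_monodromy_of_lt hij hx (hv₀ ▸ hne)) (by simp)
      (by simpa using hm)
    simpa [mul_inv_rev] using h
  · intro m hm
    exact inv_apply_lt_inv_apply hv (P := fun x => x = k ∨ (i < x ∧ j < x))
      (fun x hx hne => .inr (lt_and_lt_monodromy_of_gt hij hx (hv₀ ▸ hne)))
      (by grind) (.inl rfl)
  · rw [← mul_right_inj v, ← hv, monodromy]
    group

end Monodromy

theorem stmt8 (n : ℕ) (hn : 1 ≤ n) (i j k : ℕ) (hi : i ≤ n) (hj : j ≤ n)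
    (hk1 : 1 ≤ k) (hk2 : k ≤ n + 1) :
    ∃ v₁ v₂ v₃ : Equiv.Perm (Fin (n + 1)),
      (∀ m : Fin (n + 1), i < (m : ℕ) →
        (v₁⁻¹ ⟨i, by omega⟩ : Fin (n + 1)) < v₁⁻¹ m) ∧
      (∀ m : Fin (n + 1), j < (m : ℕ) →
        (v₂⁻¹ ⟨j, by omega⟩ : Fin (n + 1)) < v₂⁻¹ m) ∧
      (∀ m : Fin (n + 1), (m : ℕ) < k - 1 →
        v₃⁻¹ m < v₃⁻¹ ⟨k - 1, by omega⟩) ∧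
      ((∃ t : ℕ, t < n ∧
          v₃⁻¹ * wUp n i * v₁ ∈ Subgroup.closure (genSet n t) ∧
          v₁⁻¹ * wUp n j * v₂ ∈ Subgroup.closure (genSet n t) ∧
          v₂⁻¹ * wDown n k * v₃ ∈ Subgroup.closure (genSet n t)) ∨
        (∃ l₁ l₂ l₃ : List ℕ,
          l₁.Nodup ∧ l₂.Nodup ∧ l₃.Nodup ∧
          (∀ a ∈ l₁, a < n) ∧ (∀ a ∈ l₂, a < n) ∧ (∀ a ∈ l₃, a < n) ∧
          l₁.Disjoint l₂ ∧ l₁.Disjoint l₃ ∧ l₂.Disjoint l₃ ∧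
          v₃⁻¹ * wUp n i * v₁ = (l₁.map (simpleT (n + 1))).prod ∧
          v₁⁻¹ * wUp n j * v₂ = (l₂.map (simpleT (n + 1))).prod ∧
          v₂⁻¹ * wDown n k * v₃ = (l₃.map (simpleT (n + 1))).prod)) := by
  obtain ⟨k, rfl⟩ : ∃ k', k = k' + 1 := Nat.exists_eq_add_one.mpr hk1
  lift i to Fin (n + 1) using Nat.lt_succ_of_le hi
  lift j to Fin (n + 1) using Nat.lt_succ_of_le hj
  lift k to Fin (n + 1) using hk2
  have hrange : finRotate (n + 1) = ((List.range n).map (simpleT (n + 1))).prod :=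
    (wUp_eq_finRotate n).symm
  by_cases hw : (monodromy i j k).IsCycleOn Set.univ
  · rcases le_or_gt i j with hij | hij
    · obtain ⟨v₁, v₂, v₃, ho, h₁, h₂, h₃⟩ := exists_conj_eq_finRotate_of_le hij hw
      exact ⟨v₁, v₂, v₃, ho.lt₁, ho.lt₂, ho.lt₃, .inr
        ⟨[], [], List.range n, by simpa [List.nodup_range, h₁, h₂, h₃] using hrange⟩⟩
    · obtain ⟨v₁, v₂, v₃, ho, h₁, h₂, h₃⟩ := exists_conj_eq_finRotate_of_gt hij hw
      exact ⟨v₁, v₂, v₃, ho.lt₁, ho.lt₂, ho.lt₃, .inr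
        ⟨[], List.range n, [], by simpa [List.nodup_range, h₁, h₂, h₃] using hrange⟩⟩
  · obtain ⟨C, hC⟩ := exists_isAdmissible hw
    obtain ⟨v₁, v₂, v₃, ho, hparabolic⟩ := hC.exists_conj_mem_closure_genSet
    exact ⟨v₁, v₂, v₃, ho.lt₁, ho.lt₂, ho.lt₃, .inl hparabolic⟩
end

section
/- Let n ≥ 2, let μ ∈ ℤⁿ be weakly decreasing, and let x = (w, λ) with w ∈ Sₙ and λ ∈ ℤⁿ be μ-permissible. Then ℓ(x) ≤ ⟨μ, 2ρ⟩ − ℓ_R(w), where ℓ(x) := Σ_{1≤a<b≤n} |ℓ(x, e_a − e_b)| is the Iwahori–Matsumoto length of x, ⟨μ, 2ρ⟩ := Σ_{1≤a<b≤n} (μ_a − μ_b) = Σ_{a=1}^{n} (n+1−2a) μ_a, and ℓ_R(w) is the reflection length of w. -/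
/-- The length functional of `x = (w, λ)`: the value `ℓ(x, e_a − e_b)`. -/
def ellF {n : ℕ} (w : Equiv.Perm (Fin n)) (lam : Fin n → ℤ) (a b : Fin n) : ℤ :=
  lam a - lam b +
    (if a < b ∧ w b < w a then 1 else if b < a ∧ w a < w b then -1 else 0)

/-- The vector `μ^{(i)}(x) = λ + 1_{[1..i]} − w⁻¹·1_{[1..i]}` for `x = (w, λ)`. -/
def muI {n : ℕ} (w : Equiv.Perm (Fin n)) (lam : Fin n → ℤ) (i : ℕ) : Fin n → ℤ :=
  fun a => lam a + (if (a : ℕ) < i then 1 else 0) - (if ((w a : Fin n) : ℕ) < i then 1 else 0)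

/-- `x = (w, λ)` is `μ`-permissible. -/
def Permissible {n : ℕ} (μ : Fin n → ℤ) (w : Equiv.Perm (Fin n)) (lam : Fin n → ℤ) : Prop :=
  (∑ a, lam a = ∑ a, μ a) ∧
  ∀ i : ℕ, 1 ≤ i → i ≤ n →
    ∀ (ρ : Fin n → ℤ) (π : Equiv.Perm (Fin n)),
      (∀ a, ρ a = muI w lam i (π a)) → Antitone ρ →
      ∀ j : ℕ, psum ρ j ≤ psum μ j

/-- The reflection length of a permutation: the minimal number of transpositions
whose product is `w`. -/
noncomputable def reflLength {n : ℕ} (w : Equiv.Perm (Fin n)) : ℕ :=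
  sInf {k | ∃ l : List (Equiv.Perm (Fin n)),
    (∀ τ ∈ l, τ.IsSwap) ∧ l.length = k ∧ l.prod = w}

/-!
Let `v` be the shortest permutation sorting `λ`, and write `λᵛ = λ ∘ v`. Along `v` the length
functional is nonnegative on positive roots, so `ℓ(x) = ⟨λᵛ, 2ρ⟩ + inv(wv) - inv(v)`. For
`r_p(j, k) = #{a < j | p(a) < k}`, the first `j` entries of `μ^{(k)}(x)` read along `v` sum to those
of `λᵛ` plus `r_v(j, k) - r_{wv}(j, k)`, so permissibility bounds this defect by the `j`-th partial
sum `D_j` of `μ - λᵛ`, and `2 ∑ D_j = ⟨μ - λᵛ, 2ρ⟩`. What remains is a fact about two permutations: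
if `r_p(j, k) - r_q(j, k) ≤ D_j` for all `j, k`, then `ℓ_R(q p⁻¹) + inv(q) ≤ 2 ∑ D_j + inv(p)`.
Multiplying `p` by a simple reflection that shortens it, and `q` as well whenever this shortens `q`
too, preserves the hypothesis and reduces to `p = 1`. There the diagonal defects add up to half the
total displacement `∑ |q(c) - c|`, and the claim is the Diaconis–Graham inequality
`inv(q) + ℓ_R(q) ≤ ∑ |q(c) - c|`, proved by moving the largest non-fixed value to its place.
-/

open Finset Equiv

section PairSums

variable {α M : Type*} [Fintype α] [AddCommMonoid M]

lemma sum_eq_add_add_sum_compl_pair [DecidableEq α] {a b : α} (hab : a ≠ b) (f : α → M) :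
    ∑ x, f x = f a + f b + ∑ x ∈ {a, b}ᶜ, f x := by
  rw [← sum_add_sum_compl {a, b} f, sum_pair hab]

lemma sum_sum_eq_sum_cross [DecidableEq α] {a b : α} (hab : a ≠ b) {g : α → α → M}
    (hg : ∀ x ∈ ({a, b}ᶜ : Finset α), ∀ y ∈ ({a, b}ᶜ : Finset α), g x y = 0) :
    ∑ x, ∑ y, g x y = g a a + g a b + g b a + g b b +
      ∑ m ∈ {a, b}ᶜ, (g a m + g b m + g m a + g m b) := by
  have hrow : ∀ x ∈ ({a, b}ᶜ : Finset α), ∑ y, g x y = g x a + g x b := fun x hx => by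
    rw [sum_eq_add_add_sum_compl_pair hab, sum_eq_zero (hg x hx), add_zero]
  rw [sum_eq_add_add_sum_compl_pair hab, sum_congr rfl hrow,
    sum_eq_add_add_sum_compl_pair hab (g a), sum_eq_add_add_sum_compl_pair hab (g b)]
  simp only [sum_add_distrib]
  abel

lemma sum_lt_pairs_comp_perm [LinearOrder α] {g : α → α → M} (hg : ∀ a b, g a b = g b a)
    (v : Perm α) :
    ∑ p : α × α with p.1 < p.2, g (v p.1) (v p.2) = ∑ p : α × α with p.1 < p.2, g p.1 p.2 := by
  let G : Sym2 α → M := Sym2.lift ⟨g, hg⟩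
  have hsym (F : Sym2 α → M) : ∑ p : α × α with p.1 < p.2, F s(p.1, p.2) =
      ∑ i : Sym2 α with ¬ i.IsDiag, F i := by
    have h := sum_sym2_filter_not_isDiag (univ : Finset α) F
    rw [sym2_univ] at h
    rw [h]
    refine sum_congr ?_ fun _ _ => rfl
    ext p
    simpa using ne_of_lt
  calc ∑ p : α × α with p.1 < p.2, g (v p.1) (v p.2)
      = ∑ i : Sym2 α with ¬ i.IsDiag, G (i.map v) := hsym fun i => G (i.map v)
    _ = ∑ i : Sym2 α with ¬ i.IsDiag, G i :=
        sum_bijective (Sym2.map v)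
          (Finite.injective_iff_bijective.1 (Sym2.map.injective v.injective))
          (by simp [Sym2.isDiag_map v.injective]) fun _ _ => rfl
    _ = ∑ p : α × α with p.1 < p.2, g p.1 p.2 := (hsym G).symm

end PairSums

lemma exists_covBy_apply_lt_apply {α : Type*} [Finite α] [LinearOrder α] {p : Perm α}
    (hp : p ≠ 1) : ∃ a b, a ⋖ b ∧ p b < p a := by
  have := Fintype.ofFinite α
  let := Fintype.toLocallyFiniteOrder (α := α)
  contrapose! hp
  have hmono : StrictMono p := (strictMono_iff_forall_covBy p).2 fun a b hab =>
    (hp a b hab).lt_of_ne (p.injective.ne hab.ne)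
  exact Equiv.ext fun x =>
    DFunLike.congr_fun (Subsingleton.elim (hmono.orderIsoOfSurjective p p.surjective)
      (OrderIso.refl α)) x

section Inversions

variable {α : Type*} [Fintype α] [LinearOrder α]

/-- The number of inversions of a permutation of a finite linear order. -/
def inversionCount (p : Perm α) : ℕ :=
  #{x : α × α | x.1 < x.2 ∧ p x.2 < p x.1}

lemma inversionCount_eq_sum_lt (p : Perm α) :
    (inversionCount p : ℤ) = ∑ x : α × α with x.1 < x.2, if p x.2 < p x.1 then 1 else 0 := by
  rw [sum_boole, filter_filter, inversionCount]

lemma inversionCount_eq_sum_sum (p : Perm α) :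
    (inversionCount p : ℤ) = ∑ x, ∑ y, if x < y ∧ p y < p x then 1 else 0 := by
  rw [inversionCount_eq_sum_lt, sum_filter, Fintype.sum_prod_type]
  simp only [ite_and]

lemma inversionCount_one : inversionCount (1 : Perm α) = 0 :=
  card_eq_zero.2 (filter_eq_empty_iff.2 fun _ _ h => h.1.not_gt h.2)

lemma inversionCount_mul_perm (p s : Perm α) :
    (inversionCount (p * s) : ℤ) =
      ∑ x, ∑ y, if s.symm x < s.symm y ∧ p y < p x then 1 else 0 := by
  rw [inversionCount_eq_sum_sum, ← Equiv.sum_comp s.symm]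
  refine sum_congr rfl fun x _ => ?_
  rw [← Equiv.sum_comp s.symm]
  simp

/-- The positions strictly between `a` and `b` whose values lie strictly between `p b` and `p a`.
Undoing the inversion `a < b` also undoes the two inversions that each of them forms with `a` and
`b`. -/
def nestedPositions (p : Perm α) (a b : α) : Finset α :=
  {m | (a < m ∧ m < b) ∧ p b < p m ∧ p m < p a}

lemma inversionCount_eq_mul_swap_add (p : Perm α) {a b : α} (hab : a < b) (h : p b < p a) :
    inversionCount p = inversionCount (p * swap a b) + 1 + 2 * #(nestedPositions p a b) := by
  have hne : a ≠ b := hab.ne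
  let g (x y : α) : ℤ := (if x < y ∧ p y < p x then 1 else 0) -
    if swap a b x < swap a b y ∧ p y < p x then 1 else 0
  have hswap {m : α} (hm : m ∈ ({a, b}ᶜ : Finset α)) : swap a b m = m := by
    simp only [mem_compl, mem_insert, mem_singleton, not_or] at hm
    exact swap_apply_of_ne_of_ne hm.1 hm.2
  have hdiff : (inversionCount p : ℤ) - inversionCount (p * swap a b) = ∑ x, ∑ y, g x y := by
    simp only [inversionCount_eq_sum_sum p, inversionCount_mul_perm, symm_swap, g, sum_sub_distrib]
    rfl
  have hcorner : g a a + g a b + g b a + g b b = 1 := by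
    simp [g, hab, h, hab.not_gt, h.not_gt]
  have hcross : ∀ m ∈ ({a, b}ᶜ : Finset α), g a m + g b m + g m a + g m b =
      2 * if (a < m ∧ m < b) ∧ p b < p m ∧ p m < p a then 1 else 0 := fun m hm => by
    simp only [g, hswap hm, swap_apply_left, swap_apply_right]
    simp only [mem_compl, mem_insert, mem_singleton, not_or] at hm
    obtain ⟨hma, hmb⟩ := hm
    have hpa : p m ≠ p a := p.injective.ne hma
    have hpb : p m ≠ p b := p.injective.ne hmb
    grind
  have hnested : ∑ m ∈ {a, b}ᶜ, (if (a < m ∧ m < b) ∧ p b < p m ∧ p m < p a then (1 : ℤ) else 0) =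
      #(nestedPositions p a b) := by
    rw [nestedPositions, ← sum_boole, sum_eq_add_add_sum_compl_pair hne]
    simp
  have hzero : ∀ x ∈ ({a, b}ᶜ : Finset α), ∀ y ∈ ({a, b}ᶜ : Finset α), g x y = 0 :=
    fun x hx y hy => by simp only [g, hswap hx, hswap hy, sub_self]
  rw [sum_sum_eq_sum_cross hne hzero, hcorner, sum_congr rfl hcross, ← mul_sum, hnested] at hdiff
  omega

lemma card_nestedPositions_le_left [LocallyFiniteOrder α] (p : Perm α) (a b : α) :
    #(nestedPositions p a b) ≤ #(Ioo a b) :=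
  card_le_card fun _ hm => mem_Ioo.2 (mem_filter.1 hm).2.1

lemma card_nestedPositions_le_right [LocallyFiniteOrder α] (p : Perm α) (a b : α) :
    #(nestedPositions p a b) ≤ #(Ioo (p b) (p a)) :=
  card_le_card_of_injOn p (fun _ hm => mem_coe.2 (mem_Ioo.2 (mem_filter.1 hm).2.2))
    p.injective.injOn

lemma inversionCount_eq_swap_mul_add_one (p : Perm α) {a b : α} (hab : a ⋖ b)
    (h : p.symm b < p.symm a) : inversionCount p = inversionCount (swap a b * p) + 1 := by
  have hempty : nestedPositions p (p.symm b) (p.symm a) = ∅ := by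
    refine filter_eq_empty_iff.2 fun m _ hm => ?_
    simp only [apply_symm_apply] at hm
    exact hab.2 hm.2.1 hm.2.2
  have hcount := inversionCount_eq_mul_swap_add p h (by simpa using hab.lt)
  have hswap : p * swap (p.symm b) (p.symm a) = swap a b * p := by
    rw [mul_swap_eq_swap_mul, apply_symm_apply, apply_symm_apply, swap_comm]
  rwa [hempty, card_empty, mul_zero, add_zero, hswap] at hcount

end Inversions

theorem descent_induction {α : Type*} [Finite α] [LinearOrder α] {motive : Perm α → Prop}
    (one : motive 1)
    (step : ∀ (p : Perm α) (a b : α), a ⋖ b → p.symm b < p.symm a →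
      motive (swap a b * p) → motive p)
    (p : Perm α) : motive p := by
  have := Fintype.ofFinite α
  induction hN : inversionCount p using Nat.strong_induction_on generalizing p with
  | _ N ih =>
    by_cases hp : p = 1
    · exact hp ▸ one
    · obtain ⟨a, b, hab, hlt⟩ := exists_covBy_apply_lt_apply (inv_ne_one.2 hp)
      have := inversionCount_eq_swap_mul_add_one p hab hlt
      exact step p a b hab hlt (ih _ (by omega) _ rfl)

section ReflectionLength

variable {n : ℕ}

lemma reflLength_prod_le_length {l : List (Perm (Fin n))} (hl : ∀ τ ∈ l, τ.IsSwap) :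
    reflLength l.prod ≤ l.length :=
  Nat.sInf_le ⟨l, hl, rfl, rfl⟩

lemma exists_list_isSwap_length_eq_reflLength (w : Perm (Fin n)) :
    ∃ l : List (Perm (Fin n)), (∀ τ ∈ l, τ.IsSwap) ∧ l.length = reflLength w ∧ l.prod = w := by
  obtain ⟨l, hprod, hl⟩ := (Perm.truncSwapFactors w).out
  exact Nat.sInf_mem (s := {k | ∃ l : List (Perm (Fin n)),
    (∀ τ ∈ l, τ.IsSwap) ∧ l.length = k ∧ l.prod = w}) ⟨l.length, l, hl, rfl, hprod⟩

lemma reflLength_one : reflLength (1 : Perm (Fin n)) = 0 :=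
  Nat.le_zero.1 (reflLength_prod_le_length (l := []) (by simp))

lemma reflLength_swap_mul_le (w : Perm (Fin n)) {a b : Fin n} (hab : a ≠ b) :
    reflLength (swap a b * w) ≤ reflLength w + 1 := by
  obtain ⟨l, hl, hlen, rfl⟩ := exists_list_isSwap_length_eq_reflLength w
  rw [← List.prod_cons, ← hlen, ← List.length_cons]
  exact reflLength_prod_le_length (List.forall_mem_cons.2 ⟨⟨a, b, hab, rfl⟩, hl⟩)

lemma reflLength_mul_swap_le (w : Perm (Fin n)) {a b : Fin n} (hab : a ≠ b) :
    reflLength (w * swap a b) ≤ reflLength w + 1 := by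
  rw [mul_swap_eq_swap_mul]
  exact reflLength_swap_mul_le w (w.injective.ne hab)

lemma reflLength_conj_le (s w : Perm (Fin n)) : reflLength (s * w * s⁻¹) ≤ reflLength w := by
  obtain ⟨l, hl, hlen, rfl⟩ := exists_list_isSwap_length_eq_reflLength w
  rw [← MulAut.conj_apply, map_list_prod, ← hlen, ← List.length_map (MulAut.conj s)]
  refine reflLength_prod_le_length (List.forall_mem_map.2 fun τ hτ => ?_)
  obtain ⟨x, y, hxy, rfl⟩ := hl τ hτ
  exact ⟨s x, s y, s.injective.ne hxy, by rw [MulAut.conj_apply, swap_apply_apply]⟩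

end ReflectionLength

section DiaconisGraham

variable {n : ℕ}

/-- The total displacement of a permutation (Spearman's footrule). -/
def displacement (p : Perm (Fin n)) : ℤ :=
  ∑ c, |((p c : ℕ) : ℤ) - (c : ℕ)|

lemma displacement_eq_mul_swap_add {q : Perm (Fin n)} {a b : Fin n} (ha : q a = b) (hab : a < b)
    (hb : q b < b) :
    displacement q = displacement (q * swap a b) + 2 * ((b : ℕ) - max ((q b : ℕ) : ℤ) (a : ℕ)) := by
  have hrest : ∀ c ∈ ({a, b}ᶜ : Finset (Fin n)), (q * swap a b) c = q c := fun c hc => by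
    simp only [mem_compl, mem_insert, mem_singleton, not_or] at hc
    rw [Perm.mul_apply, swap_apply_of_ne_of_ne hc.1 hc.2]
  rw [displacement, displacement, sum_eq_add_add_sum_compl_pair hab.ne,
    sum_eq_add_add_sum_compl_pair hab.ne, sum_congr rfl fun c hc => by rw [← hrest c hc]]
  simp only [Perm.mul_apply, swap_apply_left, swap_apply_right, ha, Fin.lt_def, abs_eq_max_neg]
    at hab hb ⊢
  omega

lemma card_nestedPositions_add_one_le {q : Perm (Fin n)} {a b : Fin n} (ha : q a = b) (hab : a < b)
    (hb : q b < b) :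
    (#(nestedPositions q a b) : ℤ) + 1 ≤ (b : ℕ) - max ((q b : ℕ) : ℤ) (a : ℕ) := by
  have hpos := card_nestedPositions_le_left q a b
  have hval := card_nestedPositions_le_right q a b
  rw [Fin.card_Ioo] at hpos hval
  rw [ha] at hval
  omega

lemma exists_apply_lt_and_symm_apply_lt {α : Type*} [Finite α] [LinearOrder α] {q : Perm α}
    (hq : q ≠ 1) : ∃ b, q b < b ∧ q.symm b < b := by
  have := Fintype.ofFinite α
  have hsupp : q.support.Nonempty :=
    nonempty_iff_ne_empty.2 fun h => hq (Perm.support_eq_empty_iff.1 h)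
  obtain ⟨b, hb, hmax⟩ := q.support.exists_max_image id hsupp
  have hsymm : q.symm b ∈ q.support := by
    rw [← Perm.apply_mem_support, apply_symm_apply]
    exact hb
  have hne : q b ≠ b := Perm.mem_support.1 hb
  exact ⟨b, (hmax _ (Perm.apply_mem_support.2 hb)).lt_of_ne hne,
    (hmax _ hsymm).lt_of_ne fun h => hne (q.symm_apply_eq.1 h).symm⟩

theorem inversionCount_add_reflLength_le_displacement (q : Perm (Fin n)) :
    (inversionCount q : ℤ) + reflLength q ≤ displacement q := by
  induction hN : #q.support using Nat.strong_induction_on generalizing q with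
  | _ N ih =>
    by_cases hq : q = 1
    · simp [hq, inversionCount_one, reflLength_one, displacement]
    obtain ⟨b, hqb, hab⟩ := exists_apply_lt_and_symm_apply_lt hq
    set a := q.symm b
    have hqa : q a = b := q.apply_symm_apply b
    have hsupp : #(q * swap a b).support < N := by
      rw [mul_swap_eq_swap_mul, hqa, ← hN]
      exact Perm.card_support_swap_mul hqb.ne
    have hrefl := reflLength_mul_swap_le (q * swap a b) hab.ne
    rw [mul_swap_mul_self] at hrefl
    have hinv := inversionCount_eq_mul_swap_add q hab (hqa.symm ▸ hqb)
    have hdisp := displacement_eq_mul_swap_add hqa hab hqb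
    have hcard := card_nestedPositions_add_one_le hqa hab hqb
    have := ih _ hsupp _ rfl
    omega

end DiaconisGraham

section RankCount

variable {n : ℕ}

/-- The rank function `r_p(j, k)` of the permutation matrix of `p`, integer-valued so that
differences are not truncated. -/
def rankCount (p : Perm (Fin n)) (j k : ℕ) : ℤ :=
  #{a : Fin n | (a : ℕ) < j ∧ (p a : ℕ) < k}

lemma rankCount_eq_sum (p : Perm (Fin n)) (j k : ℕ) :
    rankCount p j k = ∑ a : Fin n, if (a : ℕ) < j ∧ (p a : ℕ) < k then 1 else 0 := by
  rw [rankCount, sum_boole]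

lemma rankCount_eq_psum (p : Perm (Fin n)) (j k : ℕ) :
    rankCount p j k = psum (fun a => if (p a : ℕ) < k then 1 else 0) j := by
  rw [rankCount, psum, sum_boole, filter_filter]

lemma rankCount_val_add_one (p : Perm (Fin n)) (j : ℕ) (c : Fin n) :
    rankCount p j (c + 1) = rankCount p j c + if (p.symm c : ℕ) < j then 1 else 0 := by
  have hsingle : (if (p.symm c : ℕ) < j then (1 : ℤ) else 0) =
      ∑ a, if a = p.symm c then (if (a : ℕ) < j then 1 else 0) else 0 := by simp
  rw [rankCount_eq_sum, rankCount_eq_sum, hsingle, ← sum_add_distrib]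
  refine sum_congr rfl fun a _ => ?_
  simp only [eq_symm_apply, Fin.ext_iff]
  split_ifs <;> omega

variable {a b : Fin n}

lemma val_swap_lt_iff (hab : a ⋖ b) {k : ℕ} (hk : k ≠ b) (x : Fin n) :
    (swap a b x : ℕ) < k ↔ (x : ℕ) < k := by
  have hval : (a : ℕ) + 1 = b := by simpa using hab
  rw [swap_apply_def]
  split_ifs with hxa hxb
  · rw [hxa]; omega
  · rw [hxb]; omega
  · rfl

lemma rankCount_swap_mul_of_ne (hab : a ⋖ b) (p : Perm (Fin n)) (j : ℕ) {k : ℕ} (hk : k ≠ b) :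
    rankCount (swap a b * p) j k = rankCount p j k := by
  simp only [rankCount, Perm.mul_apply, val_swap_lt_iff hab hk]

lemma rankCount_right_eq_left_add (hab : a ⋖ b) (p : Perm (Fin n)) (j : ℕ) :
    rankCount p j b = rankCount p j a + if (p.symm a : ℕ) < j then 1 else 0 := by
  have hval : (a : ℕ) + 1 = b := by simpa using hab
  rw [← hval, rankCount_val_add_one]

lemma rankCount_swap_mul_right (hab : a ⋖ b) (p : Perm (Fin n)) (j : ℕ) :
    rankCount (swap a b * p) j b = rankCount p j a + if (p.symm b : ℕ) < j then 1 else 0 := by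
  have hne : (a : ℕ) ≠ b := Fin.val_ne_of_ne hab.ne
  have hsymm : (swap a b * p).symm a = p.symm b := by
    rw [symm_apply_eq, Perm.mul_apply, apply_symm_apply, swap_apply_right]
  rw [rankCount_right_eq_left_add hab, rankCount_swap_mul_of_ne hab p j hne, hsymm]

variable {p q : Perm (Fin n)} {j : ℕ} {d : ℤ}

lemma rankCount_swap_mul_sub_swap_mul_le (hab : a ⋖ b) (hq : q.symm b < q.symm a)
    (h : ∀ k, rankCount p j k - rankCount q j k ≤ d) (k : ℕ) :
    rankCount (swap a b * p) j k - rankCount (swap a b * q) j k ≤ d := by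
  rcases eq_or_ne k b with rfl | hk
  · have hleft := h a
    have hright := h (b + 1)
    rw [rankCount_val_add_one, rankCount_val_add_one, rankCount_right_eq_left_add hab,
      rankCount_right_eq_left_add hab] at hright
    rw [rankCount_swap_mul_right hab, rankCount_swap_mul_right hab]
    grind
  · rw [rankCount_swap_mul_of_ne hab p j hk, rankCount_swap_mul_of_ne hab q j hk]
    exact h k

lemma rankCount_swap_mul_sub_le (hab : a ⋖ b) (hq : q.symm a < q.symm b)
    (h : ∀ k, rankCount p j k - rankCount q j k ≤ d) (k : ℕ) :
    rankCount (swap a b * p) j k - rankCount q j k ≤ d := by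
  rcases eq_or_ne k b with rfl | hk
  · have hleft := h a
    have hright := h (b + 1)
    rw [rankCount_val_add_one, rankCount_val_add_one, rankCount_right_eq_left_add hab,
      rankCount_right_eq_left_add hab] at hright
    rw [rankCount_swap_mul_right hab, rankCount_right_eq_left_add hab]
    grind
  · rw [rankCount_swap_mul_of_ne hab p j hk]
    exact h k

lemma rankCount_one_sub_diag (q : Perm (Fin n)) (j : ℕ) :
    rankCount (1 : Perm (Fin n)) j j - rankCount q j j =
      ∑ c : Fin n, if (c : ℕ) < j ∧ j ≤ (q c : ℕ) then 1 else 0 := by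
  rw [rankCount_eq_sum, rankCount_eq_sum, ← sum_sub_distrib]
  refine sum_congr rfl fun c _ => ?_
  rw [Perm.one_apply]
  split_ifs <;> omega

lemma displacement_eq_two_mul_sum_rankCount (q : Perm (Fin n)) :
    displacement q = 2 * ∑ j ∈ range n, (rankCount (1 : Perm (Fin n)) j j - rankCount q j j) := by
  have hcount (c : Fin n) : ∑ j ∈ range n, (if (c : ℕ) < j ∧ j ≤ (q c : ℕ) then (1 : ℤ) else 0) =
      max (((q c : ℕ) : ℤ) - (c : ℕ)) 0 := by
    have hIoc : {j ∈ range n | (c : ℕ) < j ∧ j ≤ (q c : ℕ)} = Ioc (c : ℕ) (q c) := by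
      ext j
      simp only [mem_filter, mem_range, mem_Ioc]
      omega
    rw [sum_boole, hIoc, Nat.card_Ioc]
    omega
  have hzero : ∑ c : Fin n, (((q c : ℕ) : ℤ) - (c : ℕ)) = 0 := by
    rw [sum_sub_distrib, Equiv.sum_comp q fun c => ((c : ℕ) : ℤ), sub_self]
  calc displacement q
      = ∑ c : Fin n, (2 * max (((q c : ℕ) : ℤ) - (c : ℕ)) 0 - (((q c : ℕ) : ℤ) - (c : ℕ))) :=
        sum_congr rfl fun c _ => by rw [abs_eq_max_neg]; omega
    _ = 2 * ∑ c : Fin n, max (((q c : ℕ) : ℤ) - (c : ℕ)) 0 := by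
        rw [sum_sub_distrib, hzero, sub_zero, mul_sum]
    _ = 2 * ∑ j ∈ range n, (rankCount (1 : Perm (Fin n)) j j - rankCount q j j) := by
        simp only [rankCount_one_sub_diag, ← hcount]
        rw [sum_comm]

theorem reflLength_mul_inv_add_inversionCount_le {D : ℕ → ℤ}
    (hD : ∀ j k, rankCount p j k - rankCount q j k ≤ D j) :
    (reflLength (q * p⁻¹) : ℤ) + inversionCount q ≤
      2 * ∑ j ∈ range n, D j + inversionCount p := by
  induction p using descent_induction generalizing q with
  | one =>
    have hdisp := inversionCount_add_reflLength_le_displacement q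
    have hsum : ∑ j ∈ range n, (rankCount (1 : Perm (Fin n)) j j - rankCount q j j) ≤
        ∑ j ∈ range n, D j := sum_le_sum fun j _ => hD j j
    rw [displacement_eq_two_mul_sum_rankCount] at hdisp
    simp only [inv_one, mul_one, inversionCount_one]
    omega
  | step p a b hab hp ih =>
    have hinvp := inversionCount_eq_swap_mul_add_one p hab hp
    rcases lt_or_gt_of_ne (q.symm.injective.ne hab.ne) with hq | hq
    · have hrefl := reflLength_mul_swap_le (q * (swap a b * p)⁻¹) hab.ne
      rw [mul_inv_rev, swap_inv, ← mul_assoc, mul_swap_mul_self] at hrefl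
      have := ih fun j => rankCount_swap_mul_sub_le hab hq (hD j)
      rw [mul_inv_rev, swap_inv, ← mul_assoc] at this
      omega
    · have hinvq := inversionCount_eq_swap_mul_add_one q hab hq
      have hrefl := reflLength_conj_le (swap a b)⁻¹ (swap a b * q * (swap a b * p)⁻¹)
      have hconj : (swap a b)⁻¹ * (swap a b * q * (swap a b * p)⁻¹) * (swap a b)⁻¹⁻¹ = q * p⁻¹ := by
        group
      rw [hconj] at hrefl
      have := ih fun j => rankCount_swap_mul_sub_swap_mul_le hab hq (hD j)
      omega

end RankCount

section PartialSums

variable {n : ℕ}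

lemma psum_eq_sum (f : Fin n → ℤ) (j : ℕ) :
    psum f j = ∑ a : Fin n, if (a : ℕ) < j then f a else 0 :=
  sum_filter _ _

lemma sum_range_psum (f : Fin n → ℤ) :
    ∑ j ∈ range n, psum f j = ∑ a : Fin n, ((n : ℤ) - 1 - (a : ℕ)) * f a := by
  have hcard (a : Fin n) : (#{j ∈ range n | (a : ℕ) < j} : ℤ) = n - 1 - (a : ℕ) := by
    have hIoo : {j ∈ range n | (a : ℕ) < j} = Ioo (a : ℕ) n := by
      ext j
      simp [and_comm]
    rw [hIoo, Nat.card_Ioo]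
    omega
  simp only [psum_eq_sum]
  rw [sum_comm]
  exact sum_congr rfl fun a _ => by rw [← sum_filter, sum_const, nsmul_eq_mul, hcard]

lemma sum_lt_pairs_sub (f : Fin n → ℤ) :
    ∑ p : Fin n × Fin n with p.1 < p.2, (f p.1 - f p.2) =
      ∑ a : Fin n, ((n : ℤ) - 1 - 2 * (a : ℕ)) * f a := by
  have hfst : ∑ p : Fin n × Fin n with p.1 < p.2, f p.1 =
      ∑ a : Fin n, ((n : ℤ) - 1 - (a : ℕ)) * f a := by
    rw [sum_filter, Fintype.sum_prod_type]
    refine sum_congr rfl fun a _ => ?_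
    dsimp only
    rw [← sum_filter, sum_const, filter_lt_eq_Ioi, Fin.card_Ioi, nsmul_eq_mul]
    congr 1
    omega
  have hsnd : ∑ p : Fin n × Fin n with p.1 < p.2, f p.2 = ∑ b : Fin n, ((b : ℕ) : ℤ) * f b := by
    rw [sum_filter, Fintype.sum_prod_type_right]
    refine sum_congr rfl fun b _ => ?_
    dsimp only
    rw [← sum_filter, sum_const, filter_gt_eq_Iio, Fin.card_Iio, nsmul_eq_mul]
  rw [sum_sub_distrib, hfst, hsnd, ← sum_sub_distrib]
  exact sum_congr rfl fun a _ => by ring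

lemma sum_lt_pairs_sub_eq_two_mul_sum_psum (f : Fin n → ℤ) :
    ∑ p : Fin n × Fin n with p.1 < p.2, (f p.1 - f p.2) =
      2 * ∑ j ∈ range n, psum f j - (n - 1) * ∑ a, f a := by
  rw [sum_lt_pairs_sub, sum_range_psum, mul_sum, mul_sum, ← sum_sub_distrib]
  exact sum_congr rfl fun a _ => by ring

lemma psum_comp_perm_le_psum {ρ : Fin n → ℤ} (hρ : Antitone ρ) (σ : Perm (Fin n)) (j : ℕ) :
    psum (ρ ∘ σ) j ≤ psum ρ j := by
  have hind : Antitone fun a : Fin n => if (a : ℕ) < j then (1 : ℤ) else 0 := fun a b hab => by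
    dsimp only
    split_ifs <;> omega
  simpa [psum_eq_sum] using (hind.monovary hρ).sum_mul_comp_perm_le_sum_mul (σ := σ)

end PartialSums

section Permissible

variable {n : ℕ} {μ lam : Fin n → ℤ} {w : Perm (Fin n)}

lemma exists_perm_strictMono_toLex (lam : Fin n → ℤ) :
    ∃ v : Perm (Fin n), StrictMono fun a => toLex (-lam (v a), v a) := by
  let key (a : Fin n) : ℤ ×ₗ Fin n := toLex (-lam a, a)
  have hkey : Function.Injective key := fun _ _ h => congrArg (fun t => (ofLex t).2) h
  exact ⟨Tuple.sort key, (Tuple.monotone_sort key).strictMono_of_injective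
    (hkey.comp (Tuple.sort key).injective)⟩

lemma exists_perm_antitone_comp {α : Type*} [LinearOrder α] (f : Fin n → α) :
    ∃ π : Perm (Fin n), Antitone (f ∘ π) :=
  ⟨Tuple.sort (OrderDual.toDual ∘ f), Tuple.monotone_sort (OrderDual.toDual ∘ f)⟩

lemma muI_eq_self_of_le {i : ℕ} (hi : n ≤ i) : muI w lam i = lam := by
  ext a
  simp [muI, a.isLt.trans_le hi, (w a).isLt.trans_le hi]

lemma Permissible.psum_muI_comp_le (hperm : Permissible μ w lam) (v : Perm (Fin n)) (i j : ℕ) :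
    psum (muI w lam i ∘ v) j ≤ psum μ j := by
  have hmain {i : ℕ} (h1 : 1 ≤ i) (hn : i ≤ n) : psum (muI w lam i ∘ v) j ≤ psum μ j := by
    obtain ⟨π, hπ⟩ := exists_perm_antitone_comp (muI w lam i)
    have hv : muI w lam i ∘ v = (muI w lam i ∘ π) ∘ (π⁻¹ * v) := by
      ext a
      simp
    rw [hv]
    exact (psum_comp_perm_le_psum hπ _ j).trans (hperm.2 i h1 hn _ π (fun _ => rfl) hπ j)
  rcases Nat.eq_zero_or_pos n with rfl | hn
  · simp [psum]
  by_cases hi : 1 ≤ i ∧ i ≤ n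
  · exact hmain hi.1 hi.2
  · have hmuI : muI w lam i = muI w lam n := by
      rw [muI_eq_self_of_le le_rfl]
      rcases Nat.eq_zero_or_pos i with rfl | hpos
      · ext a
        simp [muI]
      · exact muI_eq_self_of_le (by omega)
    rw [hmuI]
    exact hmain hn le_rfl

lemma psum_muI_comp (w v : Perm (Fin n)) (lam : Fin n → ℤ) (j k : ℕ) :
    psum (muI w lam k ∘ v) j =
      psum (lam ∘ v) j + rankCount v j k - rankCount (w * v) j k := by
  rw [rankCount_eq_psum, rankCount_eq_psum, psum, psum, psum, psum, ← sum_add_distrib,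
    ← sum_sub_distrib]
  rfl

lemma Permissible.rankCount_sub_le (hperm : Permissible μ w lam) (v : Perm (Fin n)) (j k : ℕ) :
    rankCount v j k - rankCount (w * v) j k ≤ psum μ j - psum (lam ∘ v) j := by
  have := hperm.psum_muI_comp_le v k j
  rw [psum_muI_comp] at this
  omega

lemma ellF_swap (w : Perm (Fin n)) (lam : Fin n → ℤ) (a b : Fin n) :
    ellF w lam b a = -ellF w lam a b := by
  unfold ellF
  split_ifs <;> omega

lemma abs_ellF_of_strictMono_toLex {v : Perm (Fin n)}
    (hv : StrictMono fun a => toLex (-lam (v a), v a)) {a b : Fin n} (hab : a < b) :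
    |ellF w lam (v a) (v b)| = lam (v a) - lam (v b) +
      (if w (v b) < w (v a) then 1 else 0) - (if v b < v a then 1 else 0) := by
  have hlex := Prod.Lex.toLex_lt_toLex.1 (hv hab)
  dsimp only at hlex
  have hv_ne : v a ≠ v b := v.injective.ne hab.ne
  have hw_ne : w (v a) ≠ w (v b) := w.injective.ne hv_ne
  rw [abs_eq_max_neg, ellF]
  split_ifs <;> omega

lemma sum_abs_ellF_eq {v : Perm (Fin n)} (hv : StrictMono fun a => toLex (-lam (v a), v a)) :
    ∑ p : Fin n × Fin n with p.1 < p.2, |ellF w lam p.1 p.2| =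
      ∑ p : Fin n × Fin n with p.1 < p.2, (lam (v p.1) - lam (v p.2)) +
        inversionCount (w * v) - inversionCount v := by
  have hsymm (a b : Fin n) : |ellF w lam a b| = |ellF w lam b a| := by rw [ellF_swap, abs_neg]
  rw [← sum_lt_pairs_comp_perm hsymm v, inversionCount_eq_sum_lt, inversionCount_eq_sum_lt,
    ← sum_add_distrib, ← sum_sub_distrib]
  exact sum_congr rfl fun p hp => abs_ellF_of_strictMono_toLex hv (mem_filter.1 hp).2

end Permissible

theorem stmt15_general {n : ℕ} {μ lam : Fin n → ℤ} {w : Perm (Fin n)}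
    (hperm : Permissible μ w lam) :
    ∑ p : Fin n × Fin n with p.1 < p.2, |ellF w lam p.1 p.2| ≤
      ∑ p : Fin n × Fin n with p.1 < p.2, (μ p.1 - μ p.2) - reflLength w := by
  obtain ⟨v, hv⟩ := exists_perm_strictMono_toLex lam
  have hrefl := reflLength_mul_inv_add_inversionCount_le (hperm.rankCount_sub_le v)
  rw [mul_inv_cancel_right, sum_sub_distrib] at hrefl
  have hlam := sum_lt_pairs_sub_eq_two_mul_sum_psum (lam ∘ v)
  simp only [Function.comp_apply, Equiv.sum_comp v lam, hperm.1] at hlam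
  rw [sum_abs_ellF_eq hv, hlam, sum_lt_pairs_sub_eq_two_mul_sum_psum μ]
  linarith

theorem stmt15 (n : ℕ) (hn : 2 ≤ n) (μ : Fin n → ℤ) (hμ : Antitone μ)
    (w : Equiv.Perm (Fin n)) (lam : Fin n → ℤ) (hperm : Permissible μ w lam) :
    (∑ p ∈ Finset.univ.filter (fun p : Fin n × Fin n => p.1 < p.2), |ellF w lam p.1 p.2|) ≤
      (∑ p ∈ Finset.univ.filter (fun p : Fin n × Fin n => p.1 < p.2), (μ p.1 - μ p.2)) -
        (reflLength w : ℤ) :=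
  stmt15_general hperm
end
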